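/- arXiv:2003.02241 — 2 statements merged into one kernel-verified Lean document; each statement's English description precedes it below -/
import Mathlib

section
/- Let A be a dehyperplane arrangement in an n-simanifold T, and X an element of L_A. Then the restriction A^X := {P ∩ X : P ∈ A, X ⊄ P, P ∩ X ≠ ∅} is a dehyperplane arrangement in the simanifold X. -/
open Set

noncomputable section

/-- The ambient Euclidean space `ℝ^N`. -/
abbrev Euc (N : ℕ) := EuclideanSpace ℝ (Fin N)

/-- An `i`-simanifold: a nonempty (open, i.e. boundaryless) contractible topological
`i`-manifold, realized as a subset of the ambient space. -/
def IsSimanifold {N : ℕ} (i : ℕ) (S : Set (Euc N)) : Prop :=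
  S.Nonempty ∧ ContractibleSpace S ∧ Nonempty (ChartedSpace (EuclideanSpace ℝ (Fin i)) S)

/-- A dehyperplane in an `n`-simanifold `T`: an `(n-1)`-simanifold `P ⊆ T` cutting `T`
into two `n`-simanifolds `plus` and `minus`, with `plus ⊔ P ⊔ minus = T` and
`closure plus ∩ closure minus = P`. -/
structure Dehyperplane (N n : ℕ) (T : Set (Euc N)) where
  P : Set (Euc N)
  plus : Set (Euc N)
  minus : Set (Euc N)
  simP : IsSimanifold (n - 1) P
  simPlus : IsSimanifold n plus
  simMinus : IsSimanifold n minus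
  union_eq : plus ∪ P ∪ minus = T
  disj_pP : Disjoint plus P
  disj_pm : Disjoint plus minus
  disj_Pm : Disjoint P minus
  closure_eq : closure plus ∩ closure minus = P

/-- `L_A`: the set of nonempty intersections of elements of `A` (empty intersection `T`),
the flats of `A`. (Ordered by reverse inclusion: `X ≤ Y ↔ Y ⊆ X`.) -/
def flats {N n : ℕ} {T : Set (Euc N)} (A : Set (Dehyperplane N n T)) : Set (Set (Euc N)) :=
  {X | X.Nonempty ∧ ∃ B ⊆ A, X = T ∩ ⋂ P ∈ B, P.P}

/-- A dehyperplane arrangement (DA) in the `n`-simanifold `T`. -/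
def IsDA {N : ℕ} (n : ℕ) (T : Set (Euc N)) (A : Set (Dehyperplane N n T)) : Prop :=
  A.Finite ∧ ∀ P ∈ A, ∀ X ∈ flats A, (P.P ∩ X).Nonempty →
    X ⊆ P.P ∨ ∃ i, 1 ≤ i ∧ i ≤ n ∧ IsSimanifold (i - 1) (P.P ∩ X) ∧
      IsSimanifold i (P.plus ∩ X) ∧ IsSimanifold i (P.minus ∩ X)

/-- `P^ε` for a sign `ε ∈ {+,0,-}`. -/
def Dehyperplane.part {N n : ℕ} {T : Set (Euc N)} (P : Dehyperplane N n T) :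
    SignType → Set (Euc N)
  | .pos => P.plus
  | .zero => P.P
  | .neg => P.minus

/-- A face of `A`: a nonempty set of the form `⋂_{P ∈ A} P^{ε_P}`. -/
def IsFace {N n : ℕ} {T : Set (Euc N)} (A : Set (Dehyperplane N n T))
    (F : Set (Euc N)) : Prop :=
  F.Nonempty ∧ ∃ ε : Dehyperplane N n T → SignType, F = T ∩ ⋂ P ∈ A, P.part (ε P)

/-- A chamber of `A`: a face with `ε_P ≠ 0` for all `P ∈ A`. -/
def IsChamber {N n : ℕ} {T : Set (Euc N)} (A : Set (Dehyperplane N n T))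
    (F : Set (Euc N)) : Prop :=
  F.Nonempty ∧ ∃ ε : Dehyperplane N n T → SignType,
    (∀ P ∈ A, ε P ≠ 0) ∧ F = T ∩ ⋂ P ∈ A, P.part (ε P)

/-- The restriction `A^X = {P ∩ X | P ∈ A, X ⊄ P, P ∩ X ≠ ∅}`, as dehyperplanes in `X`
(viewed as an `m`-simanifold), with halves `P^± ∩ X`. -/
def restrict {N n : ℕ} {T : Set (Euc N)} (A : Set (Dehyperplane N n T)) (m : ℕ)
    (X : Set (Euc N)) : Set (Dehyperplane N m X) :=
  {Q | ∃ P ∈ A, ¬ X ⊆ P.P ∧ (P.P ∩ X).Nonempty ∧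
    Q.P = P.P ∩ X ∧ Q.plus = P.plus ∩ X ∧ Q.minus = P.minus ∩ X}

/-- The dimension of a subset of `ℝ^N`: the largest `i` such that `S` contains an
`i`-simanifold. -/
def sdim {N : ℕ} (S : Set (Euc N)) : ℕ :=
  sSup {i | ∃ T : Set (Euc N), IsSimanifold i T ∧ T ⊆ S}

namespace RDA

lemma interp (n : ℕ) {δ : ℝ} (hδ : 0 < δ) : ∃ (c t : Fin (n+1) → ℝ),
    (∀ j, 0 ≤ t j ∧ t j < δ) ∧ ∀ A : Euc n →L[ℝ] Euc n,
      (1 + A).det = ∑ j, c j * (1 + t j • A).det := by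
  classical
  let t : Fin (n+1) → ℝ := fun j => (j : ℝ) * (δ / (n+1))
  have hd : 0 < δ / (n+1 : ℝ) := by positivity
  have hinj : Function.Injective t := by
    intro i j hij
    have := mul_right_cancel₀ hd.ne' hij
    exact Fin.ext (by exact_mod_cast this)
  refine ⟨fun j => (Lagrange.basis Finset.univ t j).eval 1, t, ?_, ?_⟩
  · intro j
    refine ⟨by positivity, ?_⟩
    have hj : (j : ℝ) < n + 1 := by exact_mod_cast j.2
    calc t j < (n+1) * (δ/(n+1)) := by exact mul_lt_mul_of_pos_right hj hd
      _ = δ := by field_simp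
  · intro A
    let b := (EuclideanSpace.basisFun (Fin n) ℝ).toBasis
    let M := LinearMap.toMatrix b b (A : Euc n →ₗ[ℝ] Euc n)
    let p : Polynomial ℝ := Matrix.det ((Polynomial.X : Polynomial ℝ) • M.map Polynomial.C
      + (1 : Matrix (Fin n) (Fin n) ℝ).map Polynomial.C)
    have hp : ∀ s : ℝ, p.eval s = (1 + s • A).det := by
      intro s
      have h1 : p.eval s = Matrix.det (s • M + 1) := by
        rw [← Polynomial.coe_evalRingHom, RingHom.map_det]
        congr 1
        ext i j
        by_cases h : i = j <;> simp [h, mul_comm s]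
      rw [h1]
      change _ = LinearMap.det ((1 + s • A : Euc n →L[ℝ] Euc n) : Euc n →ₗ[ℝ] Euc n)
      rw [← LinearMap.det_toMatrix b]
      congr 1
      have : ((1 + s • A : Euc n →L[ℝ] Euc n) : Euc n →ₗ[ℝ] Euc n) = 1 + s • (A : Euc n →ₗ[ℝ] Euc n) := rfl
      rw [this, map_add, map_smul, LinearMap.toMatrix_one, add_comm]
    have hdeg : p.degree < (Finset.univ : Finset (Fin (n+1))).card := by
      have := Polynomial.natDegree_det_X_add_C_le M 1
      refine (Polynomial.degree_le_natDegree).trans_lt ?_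
      rw [Fintype.card_fin] at this
      simp only [Finset.card_univ, Fintype.card_fin]
      exact_mod_cast Nat.lt_succ_of_le this
    have := Lagrange.eq_interpolate (hinj.injOn) hdeg
    have h2 := congrArg (Polynomial.eval 1) this
    rw [hp 1, one_smul] at h2
    rw [h2, Lagrange.interpolate_apply, Polynomial.eval_finsetSum]
    refine Finset.sum_congr rfl fun j _ => ?_
    rw [Polynomial.eval_mul, Polynomial.eval_C, hp, mul_comm]

/-- extension by zero of a Lipschitz function vanishing on the sphere -/
lemma lip_ext {E F : Type*} [NormedAddCommGroup E] [NormedSpace ℝ E] [NormedAddCommGroup F]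
    {R : ℝ} {K : NNReal} {u k : E → F}
    (hu : LipschitzOnWith K u (Metric.closedBall 0 R)) (h0 : ∀ x, ‖x‖ = R → u x = 0)
    (hk : ∀ x, ‖x‖ ≤ R → k x = u x) (hk' : ∀ x, R ≤ ‖x‖ → k x = 0) : LipschitzWith K k := by
  have key : ∀ x y, ‖x‖ ≤ R → R ≤ ‖y‖ → dist (k x) (k y) ≤ K * dist x y := by
    intro x y hx hy
    have hc : ContinuousOn (fun t : ℝ => ‖AffineMap.lineMap x y t‖) (Icc 0 1) := by
      apply Continuous.continuousOn
      exact continuous_norm.comp AffineMap.lineMap_continuous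
    obtain ⟨t, ht, hz⟩ := intermediate_value_Icc zero_le_one hc (show R ∈ Icc _ _ by simpa using ⟨hx, hy⟩)
    simp only at hz
    set z := AffineMap.lineMap x y t
    rw [hk' y hy, ← h0 z hz, hk x hx]
    refine (hu.dist_le_mul x (by simpa using hx) z (by simpa using hz.le)).trans ?_
    gcongr
    have : dist x z = ‖t‖ * dist x y := dist_left_lineMap x y t
    rw [this, Real.norm_of_nonneg ht.1]
    exact mul_le_of_le_one_left dist_nonneg ht.2
  refine LipschitzWith.of_dist_le_mul fun x y => ?_
  rcases le_total ‖x‖ R with hx | hx <;> rcases le_total ‖y‖ R with hy | hy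
  · rw [hk x hx, hk y hy]
    exact hu.dist_le_mul x (by simpa using hx) y (by simpa using hy)
  · exact key x y hx hy
  · rw [dist_comm, dist_comm x]; exact key y x hy hx
  · rw [hk' x hx, hk' y hy, dist_self]; positivity

lemma bij_of_lip {E : Type*} [NormedAddCommGroup E] [CompleteSpace E]
    {K : NNReal} (hK : K < 1) {k : E → E} (hk : LipschitzWith K k) :
    Function.Bijective (fun x => x + k x) := by
  constructor
  · intro x y hxy
    simp only at hxy
    have h1 : x - y = k y - k x := by
      rw [sub_eq_sub_iff_add_eq_add, hxy, add_comm]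
    have h2 := hk.dist_le_mul y x
    rw [dist_eq_norm, ← h1, dist_comm, dist_eq_norm] at h2
    have hK' : (K : ℝ) < 1 := by exact_mod_cast hK
    have : ‖x - y‖ = 0 := by nlinarith [norm_nonneg (x - y)]
    exact sub_eq_zero.1 (norm_eq_zero.1 this)
  · intro y
    have hc : ContractingWith K (fun x => y - k x) := by
      refine ⟨hK, LipschitzWith.of_dist_le_mul fun a b => ?_⟩
      rw [dist_sub_left]; exact hk.dist_le_mul a b
    refine ⟨hc.fixedPoint, ?_⟩
    have := hc.fixedPoint_isFixedPt
    unfold Function.IsFixedPt at this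
    simp only at this ⊢
    nth_rw 1 [← this]
    abel

open MeasureTheory in
lemma no_retr_smooth {n : ℕ} (hn : 1 ≤ n)
    {f : Euc n → Euc n} (hf : ContDiff ℝ 1 f) {R : ℝ}
    (hR : 0 < R) (hfR : ∀ x, ‖f x‖ = R) (hfid : ∀ x, ‖x‖ = R → f x = x) : False := by
  let A : (Euc n) → (Euc n) →L[ℝ] (Euc n) := fun x => fderiv ℝ f x - 1
  let u : (Euc n) → (Euc n) := fun x => f x - x
  have hfd : ∀ x, HasFDerivAt f (fderiv ℝ f x) x := fun x =>
    (hf.differentiable (by simp) x).hasFDerivAt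
  have hud : ∀ x, HasFDerivAt u (A x) x := fun x => (hfd x).sub (hasFDerivAt_id x)
  have hAc : Continuous A := (hf.continuous_fderiv (by simp)).sub continuous_const
  obtain ⟨C, hC⟩ := (isCompact_closedBall (0 : (Euc n)) R).exists_bound_of_continuousOn hAc.continuousOn
  have hC0 : 0 ≤ C := (norm_nonneg _).trans (hC 0 (by simp [hR.le]))
  lift C to NNReal using hC0
  have hulip : LipschitzOnWith C u (Metric.closedBall 0 R) := by
    refine Convex.lipschitzOnWith_of_nnnorm_hasFDerivWithin_le (f' := A)
      (fun x _ => (hud x).hasFDerivWithinAt) (fun x hx => ?_) (convex_closedBall _ _)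
    exact_mod_cast hC x hx
  classical
  let k : (Euc n) → (Euc n) := fun x => if ‖x‖ ≤ R then u x else 0
  have hu0 : ∀ x, ‖x‖ = R → u x = 0 := fun x hx => by simp [u, hfid x hx]
  have hk1 : ∀ x, ‖x‖ ≤ R → k x = u x := fun x hx => by simp [k, hx]
  have hk2 : ∀ x, R ≤ ‖x‖ → k x = 0 := by
    intro x hx
    by_cases h : ‖x‖ ≤ R
    · rw [hk1 x h, hu0 x (le_antisymm h hx)]
    · simp [k, h]
  have hklip : LipschitzWith C k := lip_ext hulip hu0 hk1 hk2
  have hdet : ∀ᶠ B : (Euc n) →L[ℝ] (Euc n) in nhds 1, 0 < B.det := by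
    have : ContinuousAt (fun B : (Euc n) →L[ℝ] (Euc n) => B.det) 1 :=
      (ContinuousLinearMap.continuous_det).continuousAt
    refine this.eventually (lt_mem_nhds ?_)
    have : (1 : (Euc n) →L[ℝ] (Euc n)).det = 1 := by
      change LinearMap.det (1 : (Euc n) →ₗ[ℝ] (Euc n)) = 1
      exact map_one _
    change 0 < (1 : (Euc n) →L[ℝ] (Euc n)).det
    rw [this]; exact one_pos
  obtain ⟨ε, hε, hdet⟩ := Metric.eventually_nhds_iff.1 hdet
  have hC1 : (0 : ℝ) < C + 1 := by positivity
  have hδ : 0 < min 1 ε / (C + 1 : ℝ) := by positivity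
  obtain ⟨c, t, ht, hdets⟩ := interp n hδ
  have htC : ∀ s : ℝ, 0 ≤ s → s < min 1 ε / (C + 1 : ℝ) → s * C < 1 ∧ s * C < ε := by
    intro s h0 hs
    rw [lt_div_iff₀ hC1] at hs
    have := lt_min_iff.1 hs
    constructor <;> nlinarith
  have hint : ∀ s : ℝ, Continuous fun x => (1 + s • A x).det := fun s =>
    ContinuousLinearMap.continuous_det.comp (by fun_prop)
  have hI : ∀ s : ℝ, IntegrableOn (fun x => (1 + s • A x).det) (Metric.ball 0 R) := by
    intro s
    exact ((hint s).continuousOn.integrableOn_compact (isCompact_closedBall (0:(Euc n)) R)).mono_set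
      Metric.ball_subset_closedBall
  have hvol : ∀ s : ℝ, 0 ≤ s → s < min 1 ε / (C + 1 : ℝ) →
      ∫ x in Metric.ball (0 : (Euc n)) R, (1 + s • A x).det = (volume (Metric.ball (0 : (Euc n)) R)).toReal := by
    intro s hs0 hs
    obtain ⟨hs1, hs2⟩ := htC s hs0 hs
    have hbij : Function.Bijective (fun x => x + s • k x) := by
      refine bij_of_lip (K := s.toNNReal * C) ?_ ?_
      · rw [← NNReal.coe_lt_coe]; simpa [hs0] using hs1
      · refine LipschitzWith.of_dist_le_mul fun x y => ?_
        have := hklip.dist_le_mul x y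
        rw [dist_smul₀, Real.norm_of_nonneg hs0]
        simp only [NNReal.coe_mul, Real.coe_toNNReal _ hs0]
        rw [mul_assoc]
        gcongr
    have himg : (fun x => x + s • u x) '' Metric.ball (0 : (Euc n)) R = Metric.ball 0 R := by
      have h1 : (fun x => x + s • u x) '' Metric.ball (0 : (Euc n)) R
          = (fun x => x + s • k x) '' Metric.ball (0 : (Euc n)) R := by
        refine image_congr fun x hx => ?_
        rw [hk1 x (by simpa using (le_of_lt (by simpa using hx)))]
      have h2 : (fun x => x + s • k x) '' (Metric.ball (0 : (Euc n)) R)ᶜ = (Metric.ball (0 : (Euc n)) R)ᶜ := by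
        have : EqOn (fun x => x + s • k x) id (Metric.ball (0 : (Euc n)) R)ᶜ := by
          intro x hx
          simp only [hk2 x (by simpa using hx), smul_zero, add_zero, id]
        rw [this.image_eq, image_id]
      rw [h1]
      rw [image_compl_eq hbij] at h2
      exact compl_injective h2
    have hinj : InjOn (fun x => x + s • u x) (Metric.ball (0 : (Euc n)) R) := by
      intro x hx y hy hxy
      simp only at hxy
      rw [← hk1 x (by simpa using (le_of_lt (by simpa using hx))),
        ← hk1 y (by simpa using (le_of_lt (by simpa using hy)))] at hxy
      exact hbij.1 hxy
    have hpos : ∀ x ∈ Metric.ball (0 : (Euc n)) R, 0 < (1 + s • A x).det := by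
      intro x hx
      apply hdet
      rw [dist_eq_norm, add_sub_cancel_left, norm_smul, Real.norm_of_nonneg hs0]
      exact (mul_le_mul_of_nonneg_left (hC x (Metric.ball_subset_closedBall hx)) hs0).trans_lt hs2
    have hcv := lintegral_abs_det_fderiv_eq_addHaar_image volume
      (f := fun x => x + s • u x) (f' := fun x => 1 + s • A x)
      (Metric.isOpen_ball (x := (0 : (Euc n))) (ε := R)).measurableSet
      (fun x _ => ((hasFDerivAt_id x).add ((hud x).const_smul s)).hasFDerivWithinAt) hinj
    rw [himg] at hcv
    rw [integral_eq_lintegral_of_nonneg_ae, ← hcv]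
    · congr 1
      refine setLIntegral_congr_fun Metric.isOpen_ball.measurableSet fun x hx => ?_
      rw [abs_of_pos (hpos x hx)]
    · rw [Filter.EventuallyLE, ae_restrict_iff' Metric.isOpen_ball.measurableSet]
      exact Filter.Eventually.of_forall fun x hx => (hpos x hx).le
    · exact (hint s).aestronglyMeasurable
  have hsum : ∑ j, c j = 1 := by
    have := hdets 0
    have h1 : (1 : (Euc n) →L[ℝ] (Euc n)).det = 1 := by
      change LinearMap.det (1 : (Euc n) →ₗ[ℝ] (Euc n)) = 1
      exact map_one _
    have h0 : ∀ j, (1 + t j • (0 : (Euc n) →L[ℝ] (Euc n))).det = 1 := fun j => by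
      have hz : t j • (0 : (Euc n) →L[ℝ] (Euc n)) = 0 := by ext v; simp
      rw [hz, add_zero, h1]
    rw [add_zero, h1, Finset.sum_congr rfl fun j _ => by rw [h0 j, mul_one]] at this
    exact this.symm
  have hfinal : ∫ x in Metric.ball (0 : (Euc n)) R, (1 + A x).det
      = (volume (Metric.ball (0 : (Euc n)) R)).toReal := by
    rw [integral_congr_ae (Filter.Eventually.of_forall fun x => hdets (A x))]
    rw [integral_finsetSum _ (fun j _ => (hI (t j)).const_mul (c j))]
    simp_rw [integral_const_mul]
    rw [Finset.sum_congr rfl fun j _ => by rw [hvol (t j) (ht j).1 (ht j).2], ← Finset.sum_mul, hsum,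
      one_mul]
  have hzero : ∀ x, (1 + A x).det = 0 := by
    intro x
    have h1 : (1 + A x) = fderiv ℝ f x := by simp [A]
    rw [h1]
    by_contra hne
    have hsurj : Function.Surjective (fderiv ℝ f x) := by
      have hu : IsUnit (LinearMap.det (fderiv ℝ f x : (Euc n) →ₗ[ℝ] (Euc n))) := isUnit_iff_ne_zero.2 hne
      have := (LinearMap.isUnit_iff_isUnit_det _).2 hu
      exact ((Module.End.isUnit_iff _).1 this).2
    obtain ⟨v, hv⟩ := hsurj (f x)
    have hd : HasFDerivAt (fun y => inner ℝ (f y) (f y)) _ x := (hfd x).inner ℝ (hfd x)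
    have hcst : (fun y => inner ℝ (f y) (f y)) = fun _ : (Euc n) => R ^ 2 := by
      funext y; rw [real_inner_self_eq_norm_sq, hfR]
    rw [hcst] at hd
    have h0 := hd.unique (hasFDerivAt_const _ _)
    have h0 := congrArg (fun L => L v) h0
    simp [hv, hfR] at h0
    exact hR.ne' h0
  simp only [hzero, integral_zero] at hfinal
  have : 0 < (volume (Metric.ball (0 : (Euc n)) R)).toReal :=
    ENNReal.toReal_pos (Metric.measure_ball_pos _ _ hR).ne' measure_ball_lt_top.ne
  linarith

lemma no_retr {n : ℕ} {F : Euc n → Euc n}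
    (hF : Continuous F) {r : ℝ} (hid : ∀ x, r ≤ ‖x‖ → F x = x) : ∃ x, F x = 0 := by
  rcases Nat.eq_zero_or_pos n with rfl | hn
  · exact ⟨0, Subsingleton.elim _ _⟩
  by_contra! hne
  have hr : 0 < r := by
    by_contra! h
    exact hne 0 (hid 0 (by simpa using h))
  obtain ⟨g, hg, hgF, hgs⟩ := (hF.sub continuous_id).exists_contDiff_approx 1
    (ε := fun x => ‖F x‖) hF.norm (fun x => norm_pos_iff.2 (hne x))
  let G : (Euc n) → (Euc n) := fun x => g x + x
  have hG : ContDiff ℝ 1 G := hg.add contDiff_id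
  have hGne : ∀ x, G x ≠ 0 := by
    intro x hx
    have := hgF x
    have h2 : g x = - x := eq_neg_of_add_eq_zero_left hx
    rw [h2, dist_eq_norm, Pi.sub_apply, id] at this
    have h3 : -x - (F x - x) = - F x := by abel
    rw [h3, norm_neg] at this
    exact lt_irrefl _ this
  have hGid : ∀ x, r ≤ ‖x‖ → G x = x := by
    intro x hx
    have : g x = 0 := by
      by_contra h
      exact hgs h (by simp [hid x hx])
    simp [G, this]
  refine no_retr_smooth (f := fun x => (r / ‖G x‖) • G x) hn ?_ hr ?_ ?_
  · exact (contDiff_const.div (hG.norm ℝ hGne) (fun x => (norm_pos_iff.2 (hGne x)).ne')).smul hG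
  · intro x
    have := norm_pos_iff.2 (hGne x)
    rw [norm_smul, Real.norm_of_nonneg (by positivity)]
    field_simp
  · intro x hx
    rw [hGid x hx.ge, hx, div_self hr.ne', one_smul]

lemma continuousOn_inv_of_compact {X Y : Type*} [TopologicalSpace X] [TopologicalSpace Y] [T2Space Y]
    [Nonempty X] {K : Set X} (hK : IsCompact K) {f : X → Y} (hf : ContinuousOn f K)
    (hi : InjOn f K) : ContinuousOn (Function.invFunOn f K) (f '' K) := by
  rw [continuousOn_iff_isClosed]
  intro t ht
  refine ⟨f '' (K ∩ t), ((hK.inter_right ht).image_of_continuousOn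
    (hf.mono inter_subset_left)).isClosed, ?_⟩
  ext y
  constructor
  · rintro ⟨hy, x, hx, rfl⟩
    rw [mem_preimage, hi.leftInvOn_invFunOn hx] at hy
    exact ⟨⟨x, ⟨hx, hy⟩, rfl⟩, x, hx, rfl⟩
  · rintro ⟨⟨x, ⟨hx, hxt⟩, rfl⟩, _⟩
    refine ⟨?_, x, hx, rfl⟩
    rw [mem_preimage, hi.leftInvOn_invFunOn hx]
    exact hxt

lemma tietze {X : Type*} [TopologicalSpace X] [NormalSpace X] {n : ℕ} {S : Set X} (hS : IsClosed S)
    {f : X → Euc n} (hf : ContinuousOn f S) : ∃ g : X → Euc n, Continuous g ∧ EqOn g f S := by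
  obtain ⟨g, hg⟩ := ContinuousMap.exists_restrict_eq hS ⟨S.domRestrict f, hf.domRestrict⟩
  refine ⟨g, g.continuous, fun x hx => ?_⟩
  exact DFunLike.congr_fun hg ⟨x, hx⟩

/-- A closed ball of `ℝ^m` does not embed in `ℝ^i` for `i < m`. -/
lemma dim_le_of_ball {m i : ℕ} {h : Euc m → Euc i} {z : Euc m} {r : ℝ} (hr : 0 < r)
    (hc : ContinuousOn h (Metric.closedBall z r)) (hi : InjOn h (Metric.closedBall z r)) :
    m ≤ i := by
  by_contra! hlt
  have hK := isCompact_closedBall z r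
  obtain ⟨G, hG, hGeq⟩ := tietze (hK.image_of_continuousOn hc).isClosed
    (continuousOn_inv_of_compact hK hc hi)
  obtain ⟨Q, hQ, hQG, -⟩ := hG.exists_contDiff_approx 1 (ε := fun _ => r / 4) continuous_const
    (fun _ => by positivity)
  have hdense := ContDiff.dense_compl_range_of_finrank_lt_finrank hQ (by simpa using hlt)
  obtain ⟨y, hy, hyz⟩ := hdense.exists_dist_lt z (show 0 < r / 4 by positivity)
  -- nearest point retraction onto the ball
  let c : Euc m → ℝ := fun x => r / max r ‖x‖
  have hmax : ∀ x : Euc m, 0 < max r ‖x‖ := fun x => lt_max_of_lt_left hr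
  have hcc : Continuous c := continuous_const.div (continuous_const.max continuous_norm)
    (fun x => (hmax x).ne')
  let π : Euc m → Euc m := fun x => c x • x
  have hπ : Continuous π := hcc.smul continuous_id
  have hπr : ∀ x, ‖π x‖ ≤ r := by
    intro x
    rw [norm_smul, Real.norm_of_nonneg (by have := hmax x; positivity), div_mul_eq_mul_div,
      div_le_iff₀ (hmax x)]
    gcongr
    exact le_max_right _ _
  have hπid : ∀ x, ‖x‖ ≤ r → π x = x := by
    intro x hx
    simp [π, c, max_eq_left hx, hr.ne']
  have hmem : ∀ x, z + π x ∈ Metric.closedBall z r := by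
    intro x; simpa using hπr x
  let e : Euc m → Euc m := fun x => Q (h (z + π x)) - y - π x
  have he : Continuous e := by
    have h1 : Continuous fun x => h (z + π x) :=
      hc.comp_continuous (continuous_const.add hπ) hmem
    exact ((hQ.continuous.comp h1).sub continuous_const).sub hπ
  have hen : ∀ x, ‖e x‖ ≤ r / 2 := by
    intro x
    have h1 := hQG (h (z + π x))
    rw [hGeq ⟨_, hmem x, rfl⟩, hi.leftInvOn_invFunOn (hmem x), dist_eq_norm] at h1
    rw [dist_eq_norm] at hyz
    have : e x = (Q (h (z + π x)) - (z + π x)) + (z - y) := by simp only [e]; abel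
    rw [this]
    refine (norm_add_le _ _).trans ?_
    linarith
  let F : Euc m → Euc m := fun x => x + (max 0 (min 1 ((2 * r - ‖x‖) / r))) • e x
  have hF : Continuous F := by
    fun_prop
  obtain ⟨x, hx⟩ := no_retr hF (r := 2 * r) (by
    intro x hx
    have : (2 * r - ‖x‖) / r ≤ 0 := div_nonpos_of_nonpos_of_nonneg (by linarith) hr.le
    have h2 : max 0 (min 1 ((2 * r - ‖x‖) / r)) = 0 := max_eq_left ((min_le_right _ _).trans this)
    simp only [F, h2, zero_smul, add_zero])
  rcases le_total ‖x‖ r with hxr | hxr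
  · have : 1 ≤ (2 * r - ‖x‖) / r := by rw [le_div_iff₀ hr]; linarith
    simp only [F, min_eq_left this, max_eq_right zero_le_one, one_smul, e, hπid x hxr] at hx
    apply hy
    refine ⟨h (z + x), ?_⟩
    rw [add_sub_cancel] at hx
    exact sub_eq_zero.1 hx
  · have h1 : ‖x‖ = ‖(max 0 (min 1 ((2 * r - ‖x‖) / r))) • e x‖ :=
      (congrArg norm (eq_neg_of_add_eq_zero_left hx)).trans (norm_neg _)
    rw [norm_smul, Real.norm_of_nonneg (le_max_left _ _)] at h1
    have h2 : max 0 (min 1 ((2 * r - ‖x‖) / r)) ≤ 1 := max_le zero_le_one (min_le_left _ _)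
    have h3 := mul_le_mul h2 (hen x) (norm_nonneg _) zero_le_one
    linarith

lemma dim_le {m i : ℕ} {S X : Type*} [TopologicalSpace S] [TopologicalSpace X]
    [ChartedSpace (Euc m) S] [ChartedSpace (Euc i) X] [Nonempty S] {f : S → X}
    (hf : Continuous f) (hfi : Function.Injective f) : m ≤ i := by
  obtain ⟨s⟩ := ‹Nonempty S›
  let ψ := chartAt (Euc m) s
  let φ := chartAt (Euc i) (f s)
  have hs : s ∈ ψ.source := mem_chart_source _ s
  have hO : IsOpen (ψ.source ∩ f ⁻¹' φ.source) := ψ.open_source.inter (φ.open_source.preimage hf)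
  have h1 : ψ.target ∩ ψ.symm ⁻¹' (f ⁻¹' φ.source) ∈ nhds (ψ s) := by
    refine IsOpen.mem_nhds ?_ ⟨ψ.map_source hs, ?_⟩
    · exact ψ.symm.isOpen_inter_preimage (φ.open_source.preimage hf)
    · rw [mem_preimage, ψ.left_inv hs]
      exact mem_chart_source _ (f s)
  obtain ⟨r, hr, hsub⟩ := Metric.nhds_basis_closedBall.mem_iff.1 h1
  refine dim_le_of_ball (h := fun y => φ (f (ψ.symm y))) (z := ψ s) hr ?_ ?_
  · refine φ.continuousOn.comp (t := φ.source)
      (hf.comp_continuousOn (ψ.continuousOn_symm.mono fun y hy => (hsub hy).1)) ?_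
    intro y hy; exact (hsub hy).2
  · intro y hy y' hy' h
    have := hfi (φ.injOn (hsub hy).2 (hsub hy').2 h)
    exact ψ.symm.injOn (hsub hy).1 (hsub hy').1 this

/-- Borsuk's homotopy extension for maps to `ℝ^n \ 0`. -/
lemma borsuk {n i : ℕ} {C Z : Set (Euc n)} (hC : IsCompact C) (hZ : IsClosed Z) (hZC : Z ⊆ C)
    {h : Euc n × ℝ → Euc i} (hh : ContinuousOn h (Z ×ˢ Icc 0 1))
    (hh0 : ∀ x ∈ Z, ∀ t ∈ Icc (0 : ℝ) 1, h (x, t) ≠ 0)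
    (hext : ∃ g : Euc n → Euc i, ContinuousOn g C ∧ (∀ x ∈ C, g x ≠ 0) ∧ ∀ x ∈ Z, g x = h (x, 0)) :
    ∃ g : Euc n → Euc i, ContinuousOn g C ∧ (∀ x ∈ C, g x ≠ 0) ∧ ∀ x ∈ Z, g x = h (x, 1) := by
  classical
  obtain ⟨g, hg, hg0, hgh⟩ := hext
  let k : Euc n × ℝ → Euc i := fun p => if p.1 ∈ Z then h p else g p.1
  have hS1 : IsClosed (Z ×ˢ Icc (0 : ℝ) 1) := hZ.prod isClosed_Icc
  have hS2 : IsClosed (C ×ˢ ({0} : Set ℝ)) := hC.isClosed.prod isClosed_singleton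
  have hk1 : EqOn k h (Z ×ˢ Icc (0 : ℝ) 1) := fun p hp => if_pos hp.1
  have hk2 : EqOn k (fun p => g p.1) (C ×ˢ ({0} : Set ℝ)) := by
    rintro ⟨x, t⟩ ⟨hx, ht⟩
    obtain rfl : t = 0 := ht
    by_cases hxZ : x ∈ Z
    · simp only [k, hxZ, if_true]; exact (hgh x hxZ).symm
    · simp only [k, hxZ, if_false]
  have hk : ContinuousOn k (Z ×ˢ Icc (0 : ℝ) 1 ∪ C ×ˢ ({0} : Set ℝ)) := by
    refine ContinuousOn.union_of_isClosed (hh.congr hk1) (ContinuousOn.congr ?_ hk2) hS1 hS2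
    exact hg.comp continuousOn_fst fun p hp => hp.1
  obtain ⟨K, hK, hKeq⟩ := tietze (hS1.union hS2) hk
  let Bad : Set (Euc n) := Prod.fst '' ((C ×ˢ Icc (0 : ℝ) 1) ∩ K ⁻¹' {0})
  have hBad : IsClosed Bad :=
    (((hC.prod isCompact_Icc).inter_right (isClosed_singleton.preimage hK)).image
      continuous_fst).isClosed
  have hdisj : Disjoint Bad Z := by
    rw [Set.disjoint_left]
    rintro _ ⟨⟨x, t⟩, ⟨⟨_, ht⟩, h0⟩, rfl⟩ hxZ
    have h1 : (x, t) ∈ Z ×ˢ Icc (0 : ℝ) 1 := ⟨hxZ, ht⟩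
    rw [mem_preimage, hKeq (Or.inl h1), hk1 h1] at h0
    exact hh0 x hxZ t ht h0
  obtain ⟨l, hl0, hl1, hl⟩ := exists_continuous_zero_one_of_isClosed hBad hZ hdisj
  refine ⟨fun x => K (x, l x), (hK.comp (continuous_id.prodMk l.continuous)).continuousOn, ?_, ?_⟩
  · intro x hx h0
    have hb : x ∈ Bad := ⟨(x, l x), ⟨⟨hx, hl x⟩, h0⟩, rfl⟩
    have hlx : l x = 0 := hl0 hb
    simp only [hlx] at h0
    have h2 : (x, (0 : ℝ)) ∈ C ×ˢ ({0} : Set ℝ) := ⟨hx, rfl⟩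
    rw [hKeq (Or.inr h2), hk2 h2] at h0
    exact hg0 x hx h0
  · intro x hx
    have hlx : l x = 1 := hl1 hx
    have h1 : (x, (1 : ℝ)) ∈ Z ×ˢ Icc (0 : ℝ) 1 := ⟨hx, by simp⟩
    simp only [hlx]
    rw [hKeq (Or.inl h1), hk1 h1]

/-- the boundary of an open bounded set cannot be pushed off in the complement of an inside point
and an outside point so as to miss the segment joining them. -/
lemma no_push {n : ℕ} {V : Set (Euc n)} (hVb : Bornology.IsBounded V)
    {a q : Euc n} (ha : a ∈ V) (hq : q ∉ closure V) {ξ : Euc n × ℝ → Euc n}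
    (hξ : ContinuousOn ξ (frontier V ×ˢ Icc 0 1)) (hξ0 : ∀ x ∈ frontier V, ξ (x, 0) = x)
    (hξa : ∀ x ∈ frontier V, ∀ t ∈ Icc (0 : ℝ) 1, ξ (x, t) ≠ a)
    (hξq : ∀ x ∈ frontier V, ∀ t ∈ Icc (0 : ℝ) 1, ξ (x, t) ≠ q)
    (hξs : ∀ x ∈ frontier V, ξ (x, 1) ∉ segment ℝ a q) : False := by
  classical
  have hC : IsCompact (closure V) := hVb.isCompact_closure
  have hZ : IsClosed (frontier V) := isClosed_frontier
  have hZC : frontier V ⊆ closure V := frontier_subset_closure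
  have s1 := borsuk hC hZ hZC (h := fun p => ξ p - q) (hξ.sub continuousOn_const)
    (fun x hx t ht => sub_ne_zero.2 (hξq x hx t ht))
    ⟨fun x => x - q, by fun_prop, fun x hx => sub_ne_zero.2 (fun h => hq (h ▸ hx)),
      fun x hx => by simp only [hξ0 x hx]⟩
  have hξ1 : ContinuousOn (fun x => ξ (x, 1)) (frontier V) :=
    hξ.comp (by fun_prop) (fun x hx => ⟨hx, by simp⟩)
  have s2 := borsuk hC hZ hZC (h := fun p => ξ (p.1, 1) - AffineMap.lineMap q a p.2)
    ((hξ1.comp continuousOn_fst (fun p hp => hp.1)).sub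
      (AffineMap.lineMap_continuous.comp_continuousOn continuousOn_snd))
    (fun x hx t ht => sub_ne_zero.2 (fun h => hξs x hx (by
      simp only at h
      rw [h, segment_symm, segment_eq_image_lineMap]
      exact ⟨t, ht, rfl⟩)))
    (by simpa using s1)
  have s3 := borsuk hC hZ hZC (h := fun p => ξ (p.1, 1 - p.2) - a)
    ((hξ.comp (by fun_prop) (fun p hp => ⟨hp.1, by
      have := hp.2; simp only [mem_Icc] at this ⊢; constructor <;> linarith⟩)).sub continuousOn_const)
    (fun x hx t ht => sub_ne_zero.2 (hξa x hx _ (by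
      simp only [mem_Icc] at ht ⊢; constructor <;> linarith)))
    (by simpa using s2)
  obtain ⟨g, hg, hg0, hgZ⟩ := s3
  have hgZ' : ∀ x ∈ frontier V, g x = x - a := by
    intro x hx; rw [hgZ x hx]; simp [hξ0 x hx]
  let F : Euc n → Euc n := fun x => if x ∈ closure V then g x else x - a
  have hF : Continuous F := by
    refine continuous_if ?_ ?_ ?_
    · intro x hx
      exact hgZ' x (frontier_closure_subset hx)
    · simpa using hg
    · fun_prop
  have hF0 : ∀ x, F x ≠ 0 := by
    intro x
    by_cases hx : x ∈ closure V
    · simpa only [F, hx, if_true] using hg0 x hx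
    · simp only [F, hx, if_false]
      exact sub_ne_zero.2 fun h => hx (h ▸ subset_closure ha)
  obtain ⟨r, hr⟩ := hC.isBounded.subset_closedBall a
  obtain ⟨x, hx⟩ := no_retr (F := fun x => F (a + x)) (hF.comp (by fun_prop)) (r := r + 1) (by
    intro x hx
    have : a + x ∉ closure V := fun h => by
      have := hr h
      simp at this
      linarith
    simp only [F, this, if_false, add_sub_cancel_left])
  exact hF0 _ hx

lemma core {n k : ℕ} {V : Set (Euc n)} (hV : IsOpen V) (hVb : Bornology.IsBounded V)
    {β : Euc k → Euc n} {s : Euc k} {R : ℝ} (hR : 0 < R)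
    (hβ : ContinuousOn β (Metric.closedBall s R)) (hβi : InjOn β (Metric.closedBall s R))
    {O B₀ : Set (Euc n)} (hO : IsOpen O) (hB₀ : Convex ℝ B₀) {a : Euc n} (ha : a ∈ V) (haB : a ∈ B₀)
    (hqB : β s ∈ B₀) (hq : β s ∉ closure V)
    (hDV : ∀ y ∈ Metric.closedBall s R, β y ∉ V)
    (hsph : ∀ y ∈ Metric.sphere s R, β y ∉ B₀)
    (hO1 : ∀ y ∈ Metric.ball s R, β y ∈ O)
    (hO2 : ∀ x ∈ frontier V, x ∈ O → x ∈ β '' Metric.closedBall s R)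
    (hO3 : ∀ x ∈ frontier V, x ∉ O → x ∉ B₀) : False := by
  classical
  let D := β '' Metric.closedBall s R
  have hK := isCompact_closedBall s R
  have hD : IsClosed D := (hK.image_of_continuousOn hβ).isClosed
  let α := Function.invFunOn β (Metric.closedBall s R)
  have hα : ContinuousOn α D := continuousOn_inv_of_compact hK hβ hβi
  have hαβ : ∀ y ∈ Metric.closedBall s R, α (β y) = y := fun y hy => hβi.leftInvOn_invFunOn hy
  have hαm : ∀ x ∈ D, α x ∈ Metric.closedBall s R := by
    rintro _ ⟨y, hy, rfl⟩; rw [hαβ y hy]; exact hy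
  have hβα : ∀ x ∈ D, β (α x) = x := by
    rintro _ ⟨y, hy, rfl⟩; rw [hαβ y hy]
  have hnes : ∀ x ∈ frontier V, x ∈ D → α x ≠ s := by
    intro x hx hxD h
    have := hβα x hxD
    rw [h] at this
    exact hq (this ▸ frontier_subset_closure hx)
  let c : Euc k → ℝ → ℝ := fun y t => (1 - t) + t * (R / ‖y - s‖)
  let ρ : Euc k → ℝ → Euc k := fun y t => s + c y t • (y - s)
  have hρn : ∀ y t, y ≠ s → t ∈ Icc (0:ℝ) 1 → ‖ρ y t - s‖ = (1 - t) * ‖y - s‖ + t * R := by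
    intro y t hy ht
    have hp : 0 < ‖y - s‖ := norm_pos_iff.2 (sub_ne_zero.2 hy)
    have hc : 0 ≤ c y t := by
      have h1 : 0 ≤ 1 - t := by linarith [ht.2]
      have h2 := ht.1
      positivity
    simp only [ρ, add_sub_cancel_left]
    rw [norm_smul, Real.norm_of_nonneg hc]
    simp only [c]
    field_simp
  have hρm : ∀ y t, y ∈ Metric.closedBall s R → y ≠ s → t ∈ Icc (0:ℝ) 1 →
      ρ y t ∈ Metric.closedBall s R := by
    intro y t hy hys ht
    rw [mem_closedBall_iff_norm] at hy ⊢
    rw [hρn y t hys ht]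
    nlinarith [ht.1, ht.2]
  let ξ : Euc n × ℝ → Euc n := fun p => if p.1 ∈ D then β (ρ (α p.1) p.2) else p.1
  have hcase : ∀ x ∈ frontier V, x ∉ O → ∀ t, ξ (x, t) = x := by
    intro x hx hxO t
    by_cases hxD : x ∈ D
    · simp only [ξ, hxD, if_true]
      have h1 := hαm x hxD
      have h2 : α x ∉ Metric.ball s R := fun h => hxO (hβα x hxD ▸ hO1 _ h)
      have h3 : ‖α x - s‖ = R := by
        rw [mem_closedBall_iff_norm] at h1
        rw [mem_ball_iff_norm, not_lt] at h2
        exact le_antisymm h1 h2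
      have h4 : c (α x) t = 1 := by
        simp only [c, h3, div_self hR.ne']; ring
      simp only [ρ, h4, one_smul, add_sub_cancel]
      exact hβα x hxD
    · simp only [ξ, hxD, if_false]
  have hcov : frontier V ×ˢ Icc (0 : ℝ) 1 ⊆
      (frontier V ∩ D) ×ˢ Icc (0 : ℝ) 1 ∪ (frontier V ∩ Oᶜ) ×ˢ Icc (0 : ℝ) 1 := by
    rintro ⟨x, t⟩ ⟨hx, ht⟩
    by_cases hxO : x ∈ O
    · exact Or.inl ⟨⟨hx, hO2 x hx hxO⟩, ht⟩
    · exact Or.inr ⟨⟨hx, hxO⟩, ht⟩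
  have hξc : ContinuousOn ξ (frontier V ×ˢ Icc 0 1) := by
    refine ContinuousOn.mono (ContinuousOn.union_of_isClosed ?_ ?_
      ((isClosed_frontier.inter hD).prod isClosed_Icc)
      ((isClosed_frontier.inter hO.isClosed_compl).prod isClosed_Icc)) hcov
    · have h1 : ContinuousOn (fun p : Euc n × ℝ => α p.1)
          ((frontier V ∩ D) ×ˢ Icc (0 : ℝ) 1) :=
        hα.comp continuousOn_fst fun p hp => hp.1.2
      have h2 : ContinuousOn (fun p : Euc n × ℝ => ρ (α p.1) p.2)
          ((frontier V ∩ D) ×ˢ Icc (0 : ℝ) 1) := by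
        have h3 : ContinuousOn (fun p : Euc n × ℝ => c (α p.1) p.2)
          ((frontier V ∩ D) ×ˢ Icc (0 : ℝ) 1) := by
          refine ContinuousOn.add (by fun_prop) (ContinuousOn.mul (by fun_prop)
            (ContinuousOn.div continuousOn_const (h1.sub continuousOn_const).norm ?_))
          intro p hp
          exact (norm_pos_iff.2 (sub_ne_zero.2 (hnes _ hp.1.1 hp.1.2))).ne'
        exact continuousOn_const.add (h3.smul (h1.sub continuousOn_const))
      refine ContinuousOn.congr (hβ.comp h2 ?_) ?_
      · intro p hp
        exact hρm _ _ (hαm _ hp.1.2) (hnes _ hp.1.1 hp.1.2) hp.2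
      · intro p hp
        simp only [ξ, hp.1.2, if_true, Function.comp]
    · refine ContinuousOn.congr continuousOn_fst ?_
      rintro ⟨x, t⟩ hp
      exact hcase x hp.1.1 hp.1.2 t
  -- where points go
  have hpt : ∀ x ∈ frontier V, ∀ t ∈ Icc (0:ℝ) 1,
      (x ∉ O ∧ ξ (x, t) = x) ∨ (α x ∈ Metric.closedBall s R ∧ α x ≠ s ∧
        ξ (x, t) = β (ρ (α x) t) ∧ ρ (α x) t ∈ Metric.closedBall s R) := by
    intro x hx t ht
    by_cases hxO : x ∈ O
    · have hxD := hO2 x hx hxO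
      refine Or.inr ⟨hαm x hxD, hnes x hx hxD, ?_, hρm _ _ (hαm x hxD) (hnes x hx hxD) ht⟩
      change (if x ∈ D then _ else _) = _
      rw [if_pos hxD]
    · exact Or.inl ⟨hxO, hcase x hx hxO t⟩
  have hnV : ∀ x ∈ frontier V, x ∉ V := fun x hx hxV => by
    rw [hV.frontier_eq] at hx
    exact hx.2 hxV
  refine no_push hVb ha hq hξc ?_ ?_ ?_ ?_
  · intro x hx
    by_cases hxD : x ∈ D
    · simp only [ξ, hxD, if_true]
      simp only [ρ, c, sub_zero, zero_mul, add_zero, one_smul, add_sub_cancel]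
      exact hβα x hxD
    · simp only [ξ, hxD, if_false]
  · intro x hx t ht h
    rcases hpt x hx t ht with ⟨_, h1⟩ | ⟨_, _, h1, h2⟩
    · rw [h1] at h; exact hnV x hx (h ▸ ha)
    · rw [h1] at h; exact hDV _ h2 (h ▸ ha)
  · intro x hx t ht h
    rcases hpt x hx t ht with ⟨_, h1⟩ | ⟨_, h3, h1, h2⟩
    · rw [h1] at h; exact hq (h ▸ frontier_subset_closure hx)
    · rw [h1] at h
      have h4 := hβi h2 (Metric.mem_closedBall_self hR.le) h
      have h5 := hρn _ _ h3 ht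
      rw [h4, sub_self, norm_zero] at h5
      have hp : 0 < ‖α x - s‖ := norm_pos_iff.2 (sub_ne_zero.2 h3)
      rcases eq_or_lt_of_le ht.1 with h0 | h0
      · rw [← h0] at h5; linarith
      · nlinarith [ht.1, ht.2, mul_pos h0 hR]
  · intro x hx h
    have hB : ξ (x, 1) ∈ B₀ := hB₀.segment_subset haB hqB h
    rcases hpt x hx 1 (by simp) with ⟨h0, h1⟩ | ⟨_, h3, h1, h2⟩
    · rw [h1] at hB; exact hO3 x hx h0 hB
    · rw [h1] at hB
      refine hsph _ ?_ hB
      rw [mem_sphere_iff_norm, hρn _ _ h3 (by simp)]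
      ring

/-- A connected manifold containing the frontier of an open set, disjoint from the set, is contained
in its closure. -/
lemma range_subset_closure {n k : ℕ} {X M : Type*} [TopologicalSpace X] [TopologicalSpace M]
    [ChartedSpace (Euc n) X] [ChartedSpace (Euc k) M] [PreconnectedSpace M]
    {ι : M → X} (hι : Topology.IsEmbedding ι) {U : Set X} (hU : IsOpen U)
    (hUd : ∀ m, ι m ∉ U) (hfr : frontier U ⊆ range ι) (hne : (frontier U).Nonempty) :
    ∀ m, ι m ∈ closure U := by
  let W : Set M := ι ⁻¹' closure U
  have hWc : IsClosed W := isClosed_closure.preimage hι.continuous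
  have hWne : W.Nonempty := by
    obtain ⟨x, hx⟩ := hne
    obtain ⟨m, rfl⟩ := hfr hx
    exact ⟨m, frontier_subset_closure hx⟩
  suffices hWo : IsOpen W by
    have := IsClopen.eq_univ ⟨hWc, hWo⟩ hWne
    intro m
    have hm : m ∈ W := this ▸ mem_univ m
    exact hm
  rw [isOpen_iff_mem_nhds]
  intro p hp
  by_contra hpW
  let φ := chartAt (Euc n) (ι p)
  let ψ := chartAt (Euc k) p
  have hφp : ι p ∈ φ.source := mem_chart_source _ _
  have hψp : p ∈ ψ.source := mem_chart_source _ _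
  set x₀ := φ (ι p) with hx₀
  obtain ⟨r, hr, hrsub⟩ := Metric.nhds_basis_closedBall.mem_iff.1
    (φ.open_target.mem_nhds (φ.map_source hφp))
  -- small neighbourhood in `M`
  have hA : IsOpen (φ.source ∩ φ ⁻¹' Metric.ball x₀ r) := φ.isOpen_inter_preimage Metric.isOpen_ball
  have hA' : ψ.target ∩ ψ.symm ⁻¹' (ι ⁻¹' (φ.source ∩ φ ⁻¹' Metric.ball x₀ r)) ∈ nhds (ψ p) := by
    refine (ψ.symm.isOpen_inter_preimage (hA.preimage hι.continuous)).mem_nhds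
      ⟨ψ.map_source hψp, ?_⟩
    rw [mem_preimage, ψ.left_inv hψp]
    exact ⟨hφp, Metric.mem_ball_self hr⟩
  obtain ⟨δ₀, hδ₀, hδsub⟩ := Metric.nhds_basis_closedBall.mem_iff.1 hA'
  obtain ⟨δ, hδ, rfl⟩ : ∃ δ, 0 < δ ∧ δ₀ = 3 * δ := ⟨δ₀ / 3, by positivity, by ring⟩
  have hN1 : IsOpen (ψ.source ∩ ψ ⁻¹' Metric.ball (ψ p) δ) :=
    ψ.isOpen_inter_preimage Metric.isOpen_ball
  obtain ⟨O₁, hO₁, hO₁eq⟩ := hι.isInducing.isOpen_iff.1 hN1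
  have hpO₁ : ι p ∈ O₁ := by
    have : p ∈ ι ⁻¹' O₁ := by rw [hO₁eq]; exact ⟨hψp, Metric.mem_ball_self hδ⟩
    exact this
  have hB : (φ.target ∩ φ.symm ⁻¹' O₁) ∩ Metric.ball x₀ r ∈ nhds x₀ := by
    refine ((φ.symm.isOpen_inter_preimage hO₁).inter Metric.isOpen_ball).mem_nhds
      ⟨⟨φ.map_source hφp, ?_⟩, Metric.mem_ball_self hr⟩
    rw [mem_preimage, φ.left_inv hφp]; exact hpO₁
  obtain ⟨ε, hε, hεsub⟩ := Metric.nhds_basis_ball.mem_iff.1 hB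
  have hBX : IsOpen (φ.source ∩ φ ⁻¹' Metric.ball x₀ ε) := φ.isOpen_inter_preimage Metric.isOpen_ball
  have hpBX : ι p ∈ φ.source ∩ φ ⁻¹' Metric.ball x₀ ε := ⟨hφp, Metric.mem_ball_self hε⟩
  obtain ⟨a', ⟨ha's, ha'B⟩, ha'U⟩ := mem_closure_iff.1 hp _ hBX hpBX
  obtain ⟨q, hqN, hqW⟩ : ∃ q, q ∈ (ψ.source ∩ ψ ⁻¹' Metric.ball (ψ p) δ) ∩
      ι ⁻¹' (φ.source ∩ φ ⁻¹' Metric.ball x₀ ε) ∧ q ∉ W := by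
    by_contra! h
    exact hpW (Filter.mem_of_superset ((hN1.inter (hBX.preimage hι.continuous)).mem_nhds
      ⟨⟨hψp, Metric.mem_ball_self hδ⟩, hpBX⟩) h)
  obtain ⟨⟨hqs, hqδ⟩, hqφ, hqB⟩ := hqN
  rw [mem_preimage] at hqδ hqB ha'B
  set s := ψ q with hs
  have hsub1 : Metric.closedBall s (2 * δ) ⊆ Metric.closedBall (ψ p) (3 * δ) := by
    apply Metric.closedBall_subset_closedBall'
    have := Metric.mem_ball.1 hqδ
    linarith
  have hN2 : IsOpen (ψ.source ∩ ψ ⁻¹' Metric.ball s (2 * δ)) :=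
    ψ.isOpen_inter_preimage Metric.isOpen_ball
  obtain ⟨O₂, hO₂, hO₂eq⟩ := hι.isInducing.isOpen_iff.1 hN2
  have hmemO₁ : ∀ m, ι m ∈ O₁ ↔ m ∈ ψ.source ∧ ψ m ∈ Metric.ball (ψ p) δ := fun m => by
    rw [← mem_preimage, hO₁eq]; rfl
  have hmemO₂ : ∀ m, ι m ∈ O₂ ↔ m ∈ ψ.source ∧ ψ m ∈ Metric.ball s (2 * δ) := fun m => by
    rw [← mem_preimage, hO₂eq]; rfl
  have hO₁₂ : ∀ m, ι m ∈ O₁ → ι m ∈ O₂ := by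
    intro m hm
    rw [hmemO₁] at hm
    rw [hmemO₂]
    refine ⟨hm.1, ?_⟩
    have h1 := Metric.mem_ball.1 hm.2
    have h2 := Metric.mem_ball.1 hqδ
    have h3 := dist_triangle_right (ψ m) s (ψ p)
    rw [Metric.mem_ball]; linarith
  have hV : IsOpen ((φ.target ∩ φ.symm ⁻¹' U) ∩ Metric.ball x₀ r) :=
    (φ.symm.isOpen_inter_preimage hU).inter Metric.isOpen_ball
  -- facts about the frontier
  have hclV : ∀ x ∈ closure ((φ.target ∩ φ.symm ⁻¹' U) ∩ Metric.ball x₀ r),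
      x ∈ φ.target ∧ φ.symm x ∈ closure U := by
    intro x hx
    have hxr : x ∈ Metric.closedBall x₀ r :=
      closure_minimal (inter_subset_right.trans Metric.ball_subset_closedBall)
        Metric.isClosed_closedBall hx
    refine ⟨hrsub hxr, ?_⟩
    rw [mem_closure_iff]
    intro Q hQ hxQ
    obtain ⟨y, ⟨hy1, hy2⟩, ⟨_, hy3⟩, _⟩ := mem_closure_iff.1 hx _ (φ.symm.isOpen_inter_preimage hQ)
      ⟨hrsub hxr, hxQ⟩
    exact ⟨φ.symm y, hy2, hy3⟩
  have hfrV : ∀ x ∈ frontier ((φ.target ∩ φ.symm ⁻¹' U) ∩ Metric.ball x₀ r),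
      x ∈ Metric.ball x₀ r → x ∈ φ.target ∧ ∃ m, ι m = φ.symm x := by
    intro x hx hxb
    obtain ⟨h1, h2⟩ := hclV x (frontier_subset_closure hx)
    refine ⟨h1, hfr ?_⟩
    rw [hU.frontier_eq]
    refine ⟨h2, fun h3 => ?_⟩
    rw [hV.frontier_eq] at hx
    exact hx.2 ⟨⟨h1, h3⟩, hxb⟩
  have hβq : φ (ι (ψ.symm s)) = φ (ι q) := by rw [hs, ψ.left_inv hqs]
  have hgood : ∀ y ∈ Metric.closedBall s (2 * δ), y ∈ ψ.target ∧ ι (ψ.symm y) ∈ φ.source ∧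
      φ (ι (ψ.symm y)) ∈ Metric.ball x₀ r := fun y hy => hδsub (hsub1 hy)
  refine core (k := k) (β := fun y => φ (ι (ψ.symm y))) (s := s) (R := 2 * δ)
    (O := (φ.target ∩ φ.symm ⁻¹' O₂) ∩ Metric.ball x₀ r) (B₀ := Metric.ball x₀ ε) (a := φ a')
    hV (Metric.isBounded_ball.subset inter_subset_right) (by positivity) ?_ ?_
    ((φ.symm.isOpen_inter_preimage hO₂).inter Metric.isOpen_ball) (convex_ball _ _)
    ⟨⟨φ.map_source ha's, ?_⟩, (hεsub ha'B).2⟩ ha'B ?_ ?_ ?_ ?_ ?_ ?_ ?_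
  · refine φ.continuousOn.comp (t := φ.source)
      (hι.continuous.comp_continuousOn (ψ.continuousOn_symm.mono fun y hy => (hgood y hy).1)) ?_
    intro y hy; exact (hgood y hy).2.1
  · intro y hy y' hy' h
    have := hι.injective (φ.injOn (hgood y hy).2.1 (hgood y' hy').2.1 h)
    exact ψ.symm.injOn (hgood y hy).1 (hgood y' hy').1 this
  · rw [mem_preimage, φ.left_inv ha's]; exact ha'U
  · simp only [hβq]; exact hqB
  · simp only [hβq]
    intro h
    have := (hclV _ h).2
    rw [φ.left_inv hqφ] at this
    exact hqW this
  · intro y hy h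
    have := h.1.2
    rw [mem_preimage, φ.left_inv (hgood y hy).2.1] at this
    exact hUd _ this
  · intro y hy h
    have hy' := Metric.sphere_subset_closedBall hy
    have h1 := (hεsub h).1.2
    rw [mem_preimage, φ.left_inv (hgood y hy').2.1] at h1
    have h2 := ((hmemO₂ _).1 (hO₁₂ _ h1)).2
    rw [ψ.right_inv (hgood y hy').1, Metric.mem_ball, Metric.mem_sphere.1 hy] at h2
    exact lt_irrefl _ h2
  · intro y hy
    have hg := hgood y (Metric.ball_subset_closedBall hy)
    refine ⟨⟨φ.map_source hg.2.1, ?_⟩, hg.2.2⟩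
    rw [mem_preimage, φ.left_inv hg.2.1, hmemO₂, ψ.right_inv hg.1]
    exact ⟨ψ.map_target hg.1, hy⟩
  · intro x hx hxO
    obtain ⟨hxt, m, hm⟩ := hfrV x hx hxO.2
    have h1 : ι m ∈ O₂ := hm ▸ hxO.1.2
    obtain ⟨h2, h3⟩ := (hmemO₂ m).1 h1
    refine ⟨ψ m, Metric.ball_subset_closedBall h3, ?_⟩
    simp only
    rw [ψ.left_inv h2, hm, φ.right_inv hxt]
  · intro x hx hxO hxB
    obtain ⟨hxt, m, hm⟩ := hfrV x hx (hεsub hxB).2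
    have h1 : ι m ∈ O₁ := hm ▸ (hεsub hxB).1.2
    exact hxO ⟨⟨hxt, by rw [mem_preimage, ← hm]; exact hO₁₂ m h1⟩, (hεsub hxB).2⟩


lemma half_open {N n : ℕ} {T : Set (Euc N)} {P S S' : Set (Euc N)}
    (hun : T ⊆ S ∪ P ∪ S') (hd1 : Disjoint S P) (hcl : closure S ∩ closure S' = P)
    {X : Set (Euc N)} (hXT : X ⊆ T) : IsOpen {x : X | x.1 ∈ S} := by
  have h : {x : X | x.1 ∈ S} = Subtype.val ⁻¹' (closure S')ᶜ := by
    ext x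
    simp only [mem_setOf_eq, mem_preimage, mem_compl_iff]
    constructor
    · intro hx hx'
      exact disjoint_left.1 hd1 hx (hcl ▸ ⟨subset_closure hx, hx'⟩)
    · intro hx
      rcases hun (hXT x.2) with (h | h) | h
      · exact h
      · rw [← hcl] at h; exact absurd h.2 hx
      · exact absurd (subset_closure h) hx
  rw [h]
  exact isClosed_closure.isOpen_compl.preimage continuous_subtype_val

lemma dim_le_of_subset {N i j : ℕ} {S S' : Set (Euc N)} (hS : IsSimanifold i S)
    (hS' : IsSimanifold j S') (h : S ⊆ S') : i ≤ j := by
  obtain ⟨h1, _, ⟨c1⟩⟩ := hS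
  obtain ⟨_, _, ⟨c2⟩⟩ := hS'
  haveI := h1.to_subtype
  exact dim_le (continuous_inclusion h) (inclusion_injective h)

lemma dim_le_of_open {N i m : ℕ} {S X : Set (Euc N)} (hS : IsSimanifold i (S ∩ X))
    (hX : IsSimanifold m X) (ho : IsOpen {x : X | x.1 ∈ S}) : m ≤ i := by
  obtain ⟨⟨x, hx⟩, _, ⟨c1⟩⟩ := hS
  obtain ⟨_, _, ⟨c2⟩⟩ := hX
  let O : TopologicalSpace.Opens X := ⟨_, ho⟩
  haveI : Nonempty O := ⟨⟨⟨x, hx.2⟩, hx.1⟩⟩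
  refine dim_le (S := O) (X := ↥(S ∩ X)) (f := fun y => ⟨y.1.1, y.2, y.1.2⟩) ?_ ?_
  · exact Continuous.subtype_mk (continuous_subtype_val.comp continuous_subtype_val) _
  · intro a b hab
    have hab' : a.1.1 = b.1.1 := congrArg (fun z : ↥(S ∩ X) => z.1) hab
    exact Subtype.ext (Subtype.ext hab')

lemma half_closure {N k m : ℕ} {P S S' X : Set (Euc N)} (hX : IsSimanifold m X)
    (hM : IsSimanifold k (P ∩ X)) (hun : X ⊆ S ∪ P ∪ S') (hd1 : Disjoint S P)
    (hd2 : Disjoint P S') (hd3 : Disjoint S S')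
    (ho : IsOpen {x : X | x.1 ∈ S}) (ho' : IsOpen {x : X | x.1 ∈ S'})
    (hne : (S ∩ X).Nonempty) : P ∩ X ⊆ closure (S ∩ X) := by
  obtain ⟨_, hXc, ⟨c1⟩⟩ := hX
  obtain ⟨⟨p, hp⟩, hMc, ⟨c2⟩⟩ := hM
  haveI := hXc
  haveI := hMc
  intro x hx
  have key := range_subset_closure (n := m) (k := k) (ι := inclusion (inter_subset_right : P ∩ X ⊆ X))
    (Topology.IsEmbedding.inclusion _) ho ?_ ?_ ?_ ⟨x, hx⟩
  · have := image_closure_subset_closure_image continuous_subtype_val (mem_image_of_mem _ key)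
    refine closure_mono ?_ this
    rintro _ ⟨y, hy, rfl⟩
    exact ⟨hy, y.2⟩
  · intro y hy
    exact disjoint_left.1 hd1 hy y.2.1
  · intro y hy
    rw [ho.frontier_eq] at hy
    rcases hun y.2 with (h | h) | h
    · exact absurd h hy.2
    · exact ⟨⟨y.1, h, y.2⟩, rfl⟩
    · obtain ⟨z, hz, hz'⟩ := mem_closure_iff.1 hy.1 _ ho' h
      exact absurd hz (disjoint_left.1 hd3 hz')
  · by_contra hcon
    rw [not_nonempty_iff_eq_empty, ← isClopen_iff_frontier_eq_empty] at hcon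
    rcases isClopen_iff.1 hcon with h | h
    · obtain ⟨y, hy⟩ := hne
      have : (⟨y, hy.2⟩ : X) ∈ {x : X | x.1 ∈ S} := hy.1
      rw [h] at this; exact this
    · have : (⟨p, hp.2⟩ : X) ∈ {x : X | x.1 ∈ S} := h ▸ mem_univ _
      exact disjoint_left.1 hd1 this hp.1

lemma dehyp_closed {N n : ℕ} {T : Set (Euc N)} (P : Dehyperplane N n T) : IsClosed P.P := by
  rw [← P.closure_eq]; exact isClosed_closure.inter isClosed_closure

/-- The dehyperplane cut out on a flat. -/
lemma exists_restr {N n : ℕ} {T : Set (Euc N)} (A : Set (Dehyperplane N n T)) (hA : IsDA n T A)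
    {X : Set (Euc N)} (hX : X ∈ flats A) {m : ℕ} (hXm : IsSimanifold m X)
    {P : Dehyperplane N n T} (hP : P ∈ A) (h1 : ¬ X ⊆ P.P) (h2 : (P.P ∩ X).Nonempty) :
    ∃ Q ∈ restrict A m X, Q.P = P.P ∩ X := by
  obtain ⟨i, hi1, hin, s0, sp, sm⟩ := (hA.2 P hP X hX h2).resolve_left h1
  obtain ⟨_, B, hB, hXB⟩ := hX
  have hXT : X ⊆ T := hXB ▸ inter_subset_left
  have hu1 : T ⊆ P.plus ∪ P.P ∪ P.minus := P.union_eq.ge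
  have hu2 : T ⊆ P.minus ∪ P.P ∪ P.plus := fun x hx => by
    rcases hu1 hx with (h | h) | h
    · exact Or.inr h
    · exact Or.inl (Or.inr h)
    · exact Or.inl (Or.inl h)
  have op : IsOpen {x : X | x.1 ∈ P.plus} := half_open (n := n) hu1 P.disj_pP P.closure_eq hXT
  have om : IsOpen {x : X | x.1 ∈ P.minus} :=
    half_open (n := n) hu2 P.disj_Pm.symm (by rw [inter_comm]; exact P.closure_eq) hXT
  obtain rfl : i = m :=
    le_antisymm (dim_le_of_subset sp hXm inter_subset_right) (dim_le_of_open sp hXm op)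
  refine ⟨⟨P.P ∩ X, P.plus ∩ X, P.minus ∩ X, s0, sp, sm, ?_, ?_, ?_, ?_, ?_⟩,
    ⟨P, hP, h1, h2, rfl, rfl, rfl⟩, rfl⟩
  · rw [← union_inter_distrib_right, ← union_inter_distrib_right, P.union_eq]
    exact inter_eq_right.2 hXT
  · exact P.disj_pP.mono inter_subset_left inter_subset_left
  · exact P.disj_pm.mono inter_subset_left inter_subset_left
  · exact P.disj_Pm.mono inter_subset_left inter_subset_left
  · apply subset_antisymm
    · rintro x ⟨hx, hx'⟩
      have hxP : x ∈ P.P := by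
        rw [← P.closure_eq]
        exact ⟨closure_mono inter_subset_left hx, closure_mono inter_subset_left hx'⟩
      refine ⟨hxP, ?_⟩
      rw [hXB]
      refine ⟨P.union_eq ▸ Or.inl (Or.inr hxP), ?_⟩
      have hc : IsClosed (⋂ P ∈ B, P.P) := isClosed_biInter fun P _ => dehyp_closed P
      refine hc.closure_subset_iff.2 ?_ hx
      rw [hXB]
      exact fun y hy => hy.2.2
    · exact subset_inter
        (half_closure hXm s0 (hXT.trans hu1) P.disj_pP P.disj_Pm P.disj_pm op om sp.1)
        (half_closure hXm s0 (hXT.trans hu2) P.disj_Pm.symm P.disj_pP.symm P.disj_pm.symm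
          om op sm.1)

lemma restrict_finite {N n : ℕ} {T : Set (Euc N)} {A : Set (Dehyperplane N n T)}
    (hA : A.Finite) (m : ℕ) (X : Set (Euc N)) : (restrict A m X).Finite := by
  let F : Dehyperplane N m X → Set (Euc N) × Set (Euc N) × Set (Euc N) :=
    fun Q => (Q.P, Q.plus, Q.minus)
  have hF : Function.Injective F := by
    rintro ⟨⟩ ⟨⟩ h
    simp only [F, Prod.mk.injEq] at h
    obtain ⟨rfl, rfl, rfl⟩ := h
    rfl
  refine Finite.of_finite_image (f := F) ?_ hF.injOn
  refine (hA.image fun P => (P.P ∩ X, P.plus ∩ X, P.minus ∩ X)).subset ?_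
  rintro _ ⟨Q, ⟨P, hP, _, _, h1, h2, h3⟩, rfl⟩
  exact ⟨P, hP, by simp only [F, h1, h2, h3]⟩

lemma flats_restrict {N n : ℕ} {T : Set (Euc N)} {A : Set (Dehyperplane N n T)}
    {X : Set (Euc N)} (hX : X ∈ flats A) {m : ℕ} {Y : Set (Euc N)}
    (hY : Y ∈ flats (restrict A m X)) : Y ∈ flats A := by
  obtain ⟨hYne, C, hC, hYC⟩ := hY
  obtain ⟨_, B, hB, hXB⟩ := hX
  refine ⟨hYne, B ∪ {P | P ∈ A ∧ ∃ Q ∈ C, Q.P = P.P ∩ X}, ?_, ?_⟩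
  · rintro P (h | h)
    · exact hB h
    · exact h.1
  · have hXm : ∀ x, x ∈ X ↔ x ∈ T ∧ ∀ P ∈ B, x ∈ P.P := by
      intro x; rw [hXB]; simp
    rw [hYC]
    ext x
    simp only [mem_inter_iff, mem_iInter]
    constructor
    · rintro ⟨hx, h⟩
      refine ⟨((hXm x).1 hx).1, ?_⟩
      rintro P (hP | ⟨_, Q, hQ, hQP⟩)
      · exact ((hXm x).1 hx).2 P hP
      · have := h Q hQ
        rw [hQP] at this; exact this.1
    · rintro ⟨hx, h⟩
      have hxX : x ∈ X := (hXm x).2 ⟨hx, fun P hP => h P (Or.inl hP)⟩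
      refine ⟨hxX, fun Q hQ => ?_⟩
      obtain ⟨P, hP, _, _, hQP, _⟩ := hC hQ
      rw [hQP]
      exact ⟨h P (Or.inr ⟨hP, Q, hQ, hQP⟩), hxX⟩

end RDA

/-- the restriction `A^X` of a DA `A` to a flat `X` (an `m`-simanifold)
is a DA in `X`, and it consists exactly of the sets `P ∩ X` with `P ∈ A`, `X ⊄ P`,
`P ∩ X ≠ ∅`. -/
theorem restriction_isDA {N n : ℕ} (hn : 1 ≤ n) {T : Set (Euc N)}
    (hT : IsSimanifold n T) (A : Set (Dehyperplane N n T)) (hA : IsDA n T A)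
    {X : Set (Euc N)} (hX : X ∈ flats A) {m : ℕ} (hXm : IsSimanifold m X) :
    IsDA m X (restrict A m X) ∧
      ∀ P ∈ A, ¬ X ⊆ P.P → (P.P ∩ X).Nonempty →
        ∃ Q ∈ restrict A m X, Q.P = P.P ∩ X := by
  refine ⟨⟨RDA.restrict_finite hA.1 m X, ?_⟩,
    fun P hP h1 h2 => RDA.exists_restr A hA hX hXm hP h1 h2⟩
  rintro Q ⟨P, hP, _, _, e0, ep, em⟩ Y hY hne
  have hYA := RDA.flats_restrict hX hY
  have hYX : Y ⊆ X := by
    obtain ⟨_, C, _, hYC⟩ := hY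
    rw [hYC]; exact inter_subset_left
  have hr : ∀ S : Set (Euc N), S ∩ X ∩ Y = S ∩ Y := fun S => by
    rw [inter_assoc, inter_eq_right.2 hYX]
  rw [e0, ep, em, hr, hr, hr]
  rw [e0, hr] at hne
  rcases hA.2 P hP Y hYA hne with h | ⟨i, h1, _, s0, sp, sm⟩
  · exact Or.inl (subset_inter h hYX)
  · exact Or.inr ⟨i, h1, RDA.dim_le_of_subset sp hXm (inter_subset_right.trans hYX), s0, sp, sm⟩
end
end

section
/- Let A be a dehyperplane arrangement in an n-simanifold T. For every flat X ∈ L_A, the alternating sum over flats contained in X satisfies Σ_{Y ∈ L_A, Y ≥ X} (−1)^{dim Y} #C_{A^Y} = (−1)^{dim X}. -/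
open Set

noncomputable section

section NR
open MeasureTheory Metric Topology

lemma det_lagrange {E : Type*} [NormedAddCommGroup E] [NormedSpace ℝ E] [FiniteDimensional ℝ E]
    (v : ℕ → ℝ) (hv : Function.Injective v) :
    ∃ l : ℕ → ℝ, (∑ j ∈ Finset.range (Module.finrank ℝ E + 1), l j = 1) ∧
      ∀ D : E →L[ℝ] E, (ContinuousLinearMap.id ℝ E + D).det =
        ∑ j ∈ Finset.range (Module.finrank ℝ E + 1),
          l j * (ContinuousLinearMap.id ℝ E + v j • D).det := by
  classical
  set s := Finset.range (Module.finrank ℝ E + 1)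
  have hvs : Set.InjOn v s := hv.injOn
  refine ⟨fun j => (Lagrange.basis s v j).eval 1, ?_, ?_⟩
  · have := Lagrange.sum_basis hvs (by simp [s])
    have h2 := congrArg (Polynomial.eval 1) this
    rw [Polynomial.eval_finsetSum] at h2
    simpa using h2
  · intro D
    let b := Module.finBasis ℝ E
    let M := LinearMap.toMatrix b b (D : E →ₗ[ℝ] E)
    let p : Polynomial ℝ := Matrix.det ((Polynomial.X : Polynomial ℝ) • M.map Polynomial.C +
      (1 : Matrix _ _ ℝ).map Polynomial.C)
    have hp : ∀ t : ℝ, p.eval t = (ContinuousLinearMap.id ℝ E + t • D).det := by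
      intro t
      have : (ContinuousLinearMap.id ℝ E + t • D).det =
        LinearMap.det (LinearMap.id + t • (D : E →ₗ[ℝ] E)) := rfl
      rw [this, ← LinearMap.det_toMatrix b]
      simp only [p]
      rw [← Polynomial.coe_evalRingHom, RingHom.map_det]
      congr 1
      ext i j
      simp [M, Matrix.map_apply, Matrix.one_apply]
      split_ifs <;> simp <;> ring
    have hdeg : p.degree < s.card := by
      have h := Polynomial.natDegree_det_X_add_C_le M 1
      refine lt_of_le_of_lt Polynomial.degree_le_natDegree ?_
      simp only [s, Finset.card_range]
      have : p.natDegree ≤ Module.finrank ℝ E := by simpa [p] using h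
      exact_mod_cast Nat.lt_succ_of_le this
    have hi := Lagrange.eq_interpolate hvs hdeg
    have h1 := hp 1
    rw [one_smul] at h1
    rw [← h1, hi, Lagrange.interpolate_apply, Polynomial.eval_finsetSum]
    refine Finset.sum_congr rfl fun j _ => ?_
    rw [Polynomial.eval_mul, Polynomial.eval_C, hp, mul_comm]

theorem nr_smooth {E : Type*} [NormedAddCommGroup E] [InnerProductSpace ℝ E]
    [FiniteDimensional ℝ E] [Nontrivial E] (r : E → E) (hr : ContDiff ℝ 1 r)
    (h1 : ∀ z, ‖r z‖ = 1) (h2 : ∀ z, ‖z‖ = 1 → r z = z) : False := by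
  borelize E
  let μ : Measure E := Measure.addHaar
  let u : E → E := fun z => r z - z
  have hu : ContDiff ℝ 1 u := hr.sub contDiff_id
  let D : E → E →L[ℝ] E := fun z => fderiv ℝ u z
  have hDc : Continuous D := hu.continuous_fderiv one_ne_zero
  have hD : ∀ z, HasFDerivAt u (D z) z := fun z => (hu.differentiable one_ne_zero z).hasFDerivAt
  obtain ⟨K, hK0, hK⟩ : ∃ K : ℝ, 0 < K ∧ ∀ z ∈ closedBall (0:E) 1, ‖D z‖ ≤ K := by
    obtain ⟨K, hK⟩ := (isCompact_closedBall (0:E) 1).exists_bound_of_continuousOn hDc.continuousOn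
    exact ⟨max K 1, by positivity, fun z hz => (hK z hz).trans (le_max_left _ _)⟩
  have hlip : ∀ x ∈ closedBall (0:E) 1, ∀ y ∈ closedBall (0:E) 1, ‖u y - u x‖ ≤ K * ‖y - x‖ :=
    fun x hx y hy => (convex_closedBall (0:E) 1).norm_image_sub_le_of_norm_hasFDerivWithin_le
      (fun z _ => (hD z).hasFDerivWithinAt) hK hx hy
  have key : ∀ t : ℝ, 0 ≤ t → t ≤ 1 → t * K < 1 →
      ∫ z in ball (0:E) 1, (ContinuousLinearMap.id ℝ E + t • D z).det ∂μ = μ.real (ball (0:E) 1) := by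
    intro t ht0 ht1 htK
    let f : E → E := fun z => z + t • u z
    let f' : E → E →L[ℝ] E := fun z => ContinuousLinearMap.id ℝ E + t • D z
    have hf : ∀ z, HasFDerivAt f (f' z) z := fun z => (hasFDerivAt_id z).add ((hD z).const_smul t)
    have hfC : ContDiff ℝ 1 f := contDiff_id.add (contDiff_const.smul hu)
    have hinj : InjOn f (closedBall (0:E) 1) := by
      intro x hx y hy hxy
      have e : y - x = - (t • (u y - u x)) := by
        have : x + t • u x = y + t • u y := hxy
        rw [smul_sub]
        have h3 : x - y = t • u y - t • u x := by rw [sub_eq_sub_iff_add_eq_add, this]; abel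
        rw [← h3]; abel
      have n : ‖y - x‖ ≤ t * (K * ‖y - x‖) := by
        conv_lhs => rw [e, norm_neg, norm_smul, Real.norm_of_nonneg ht0]
        exact mul_le_mul_of_nonneg_left (hlip x hx y hy) ht0
      have : ‖y - x‖ = 0 := by
        by_contra h
        have : 0 < ‖y - x‖ := lt_of_le_of_ne (norm_nonneg _) (Ne.symm h)
        nlinarith
      exact (sub_eq_zero.1 (norm_eq_zero.1 this)).symm
    have hunit : ∀ z ∈ closedBall (0:E) 1, ∀ s ∈ Icc 0 t,
        IsUnit (ContinuousLinearMap.id ℝ E + s • D z) := by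
      intro z hz s hs
      have hn : ‖-(s • D z)‖ < 1 := by
        rw [norm_neg, norm_smul, Real.norm_of_nonneg hs.1]
        refine lt_of_le_of_lt (mul_le_mul hs.2 (hK z hz) (norm_nonneg _) ht0) htK
      have := isUnit_one_sub_of_norm_lt_one hn
      rw [sub_neg_eq_add] at this
      exact this
    have hpos : ∀ z ∈ closedBall (0:E) 1, 0 < (f' z).det := by
      intro z hz
      by_contra hneg
      push Not at hneg
      have hc : ContinuousOn (fun s : ℝ => (ContinuousLinearMap.id ℝ E + s • D z).det) (Icc 0 t) := by
        have : Continuous (fun s : ℝ => (ContinuousLinearMap.id ℝ E + s • D z).det) :=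
          ContinuousLinearMap.continuous_det.comp (by fun_prop)
        exact this.continuousOn
      have := intermediate_value_Icc' ht0 hc (show (0:ℝ) ∈ Icc _ _ from ⟨hneg, by simp [ContinuousLinearMap.det]⟩)
      obtain ⟨s, hs, hs0⟩ := this
      have hu := hunit z hz s hs
      obtain ⟨w, hw⟩ := hu
      have := (ContinuousLinearEquiv.unitsEquiv ℝ E w).toLinearEquiv.isUnit_det'
      rw [isUnit_iff_ne_zero] at this
      simp only at hs0
      rw [← hw] at hs0
      exact this hs0
    have hsph : ∀ z, ‖z‖ = 1 → f z = z := by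
      intro z hz
      simp [f, u, h2 z hz]
    have hmaps : ∀ z ∈ closedBall (0:E) 1, f z ∈ closedBall (0:E) 1 := by
      intro z hz
      rw [mem_closedBall_zero_iff] at *
      have : f z = (1 - t) • z + t • r z := by simp only [f, u, smul_sub, sub_smul, one_smul]; abel
      rw [this]
      refine (norm_add_le _ _).trans ?_
      rw [norm_smul, norm_smul, h1, Real.norm_of_nonneg ht0, Real.norm_of_nonneg (by linarith)]
      nlinarith
    have himg : f '' ball (0:E) 1 = ball (0:E) 1 := by
      have hsub : f '' ball (0:E) 1 ⊆ ball (0:E) 1 := by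
        rintro _ ⟨z, hz, rfl⟩
        have hz' := ball_subset_closedBall hz
        have h := hmaps z hz'
        rw [mem_closedBall_zero_iff] at h
        rw [mem_ball_zero_iff] at hz ⊢
        refine lt_of_le_of_ne h fun he => ?_
        have h3 := hinj hz' (by rw [mem_closedBall_zero_iff]; exact h) (hsph _ he).symm
        rw [h3] at hz
        linarith
      have hopen : IsOpen (f '' ball (0:E) 1) := by
        rw [isOpen_iff_mem_nhds]
        rintro _ ⟨z, hz, rfl⟩
        have hz' := ball_subset_closedBall hz
        obtain ⟨e, he⟩ : ∃ e : E ≃L[ℝ] E, (e : E →L[ℝ] E) = f' z := by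
          obtain ⟨w, hw⟩ := hunit z hz' t ⟨ht0, le_rfl⟩
          exact ⟨ContinuousLinearEquiv.unitsEquiv ℝ E w, hw⟩
        have hs : HasStrictFDerivAt f (e : E →L[ℝ] E) z := by
          rw [he]
          exact hfC.contDiffAt.hasStrictFDerivAt' (hf z) one_ne_zero
        rw [← hs.map_nhds_eq_of_equiv]
        exact Filter.image_mem_map (isOpen_ball.mem_nhds hz)
      have hcl : ball (0:E) 1 ∩ closure (f '' ball (0:E) 1) ⊆ f '' ball (0:E) 1 := by
        rintro w ⟨hw, hwc⟩
        have hcomp : IsClosed (f '' closedBall (0:E) 1) :=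
          ((isCompact_closedBall (0:E) 1).image hfC.continuous).isClosed
        obtain ⟨z, hz, rfl⟩ := closure_minimal (image_mono ball_subset_closedBall) hcomp hwc
        refine ⟨z, ?_, rfl⟩
        rw [mem_closedBall_zero_iff] at hz
        rw [mem_ball_zero_iff] at hw ⊢
        refine lt_of_le_of_ne hz fun he => ?_
        rw [hsph z he] at hw
        linarith
      refine hsub.antisymm ?_
      refine (convex_ball (0:E) 1).isPreconnected.subset_of_closure_inter_subset hopen ?_ ?_
      · obtain ⟨z, hz⟩ : (ball (0:E) 1).Nonempty := ⟨0, by simp⟩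
        exact ⟨f z, hsub ⟨z, hz, rfl⟩, z, hz, rfl⟩
      · rw [inter_comm]; exact hcl
    have hvol := integral_image_eq_integral_abs_det_fderiv_smul μ (measurableSet_ball (x := (0:E)) (ε := 1))
      (fun z _ => (hf z).hasFDerivWithinAt) (hinj.mono ball_subset_closedBall) (fun _ => (1:ℝ))
    rw [himg] at hvol
    simp only [integral_const, smul_eq_mul, mul_one, measureReal_restrict_apply_univ] at hvol
    rw [hvol]
    refine setIntegral_congr_fun measurableSet_ball fun z hz => ?_
    exact (abs_of_pos (hpos z (ball_subset_closedBall hz))).symm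
  -- interpolation
  obtain ⟨τ, hτ0, hτ1, hτK⟩ : ∃ τ : ℝ, 0 < τ ∧ τ ≤ 1 ∧ τ * K < 1 := by
    refine ⟨min 1 (1 / (2 * K)), by positivity, min_le_left _ _, ?_⟩
    calc min 1 (1 / (2 * K)) * K ≤ (1 / (2 * K)) * K :=
          mul_le_mul_of_nonneg_right (min_le_right _ _) hK0.le
      _ = 1 / 2 := by field_simp
      _ < 1 := by norm_num
  let v : ℕ → ℝ := fun j => τ / (j + 1)
  have hv : Function.Injective v := by
    intro a b hab
    simp only [v] at hab
    rw [div_eq_div_iff (by positivity) (by positivity)] at hab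
    have := mul_left_cancel₀ hτ0.ne' hab
    have : (a:ℝ) = b := by linarith
    exact_mod_cast this
  have hvle : ∀ j, v j ≤ τ := fun j => div_le_self hτ0.le (by simp)
  have hv0 : ∀ j, 0 ≤ v j := fun j => by positivity
  obtain ⟨l, hl1, hl⟩ := det_lagrange (E := E) v hv
  have hzero : ∀ z, (ContinuousLinearMap.id ℝ E + D z).det = 0 := by
    intro z
    have hrz : HasFDerivAt r (ContinuousLinearMap.id ℝ E + D z) z := by
      have := (hasFDerivAt_id z).add (hD z)
      refine this.congr_of_eventuallyEq (Filter.Eventually.of_forall fun w => ?_)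
      simp [u]
    have hin : ∀ w, inner ℝ (r z) ((ContinuousLinearMap.id ℝ E + D z) w) = 0 := by
      intro w
      have h3 := (hrz.inner ℝ hrz)
      have h4 : (fun t => inner ℝ (r t) (r t)) = fun _ => (1:ℝ) := by
        ext t; rw [real_inner_self_eq_norm_sq, h1]; norm_num
      rw [h4] at h3
      have h5 := h3.unique (hasFDerivAt_const (1:ℝ) z)
      have h6 := congrArg (fun L => L w) h5
      simp only [ContinuousLinearMap.comp_apply, ContinuousLinearMap.prod_apply,
        fderivInnerCLM_apply, _root_.zero_apply] at h6
      rw [real_inner_comm (r z)] at h6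
      linarith
    by_contra hne
    have hs : Function.Surjective (ContinuousLinearMap.id ℝ E + D z : E →L[ℝ] E) := by
      have := LinearMap.equivOfDetNeZero ((ContinuousLinearMap.id ℝ E + D z : E →L[ℝ] E) : E →ₗ[ℝ] E) hne
      exact (LinearMap.equivOfDetNeZero ((ContinuousLinearMap.id ℝ E + D z : E →L[ℝ] E) : E →ₗ[ℝ] E) hne).surjective
    obtain ⟨w, hw⟩ := hs (r z)
    have := hin w
    rw [hw, real_inner_self_eq_norm_sq, h1] at this
    norm_num at this
  have hI : ∀ t : ℝ, IntegrableOn (fun z => (ContinuousLinearMap.id ℝ E + t • D z).det) (ball (0:E) 1) μ := by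
    intro t
    have : Continuous (fun z => (ContinuousLinearMap.id ℝ E + t • D z).det) :=
      ContinuousLinearMap.continuous_det.comp (by fun_prop)
    exact (this.continuousOn.integrableOn_compact (isCompact_closedBall (0:E) 1)).mono_set ball_subset_closedBall
  have hfin : (0:ℝ) = μ.real (ball (0:E) 1) := by
    calc (0:ℝ) = ∫ z in ball (0:E) 1, (ContinuousLinearMap.id ℝ E + D z).det ∂μ := by simp [hzero]
      _ = ∫ z in ball (0:E) 1, ∑ j ∈ Finset.range (Module.finrank ℝ E + 1),
          l j * (ContinuousLinearMap.id ℝ E + v j • D z).det ∂μ := by simp_rw [← hl]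
      _ = ∑ j ∈ Finset.range (Module.finrank ℝ E + 1), l j * μ.real (ball (0:E) 1) := by
          rw [integral_finsetSum _ (fun j _ => (hI (v j)).const_mul (l j))]
          refine Finset.sum_congr rfl fun j _ => ?_
          rw [integral_const_mul, key (v j) (hv0 j) ((hvle j).trans hτ1)
            (lt_of_le_of_lt (mul_le_mul_of_nonneg_right (hvle j) hK0.le) hτK)]
      _ = μ.real (ball (0:E) 1) := by rw [← Finset.sum_mul, hl1, one_mul]
  have hp : 0 < μ.real (ball (0:E) 1) := by
    rw [measureReal_def]
    exact ENNReal.toReal_pos (measure_ball_pos μ _ one_pos).ne' measure_ball_lt_top.ne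
  linarith

end NR

section NR2
open Metric Topology Filter

lemma glue_cont {X Y : Type*} [TopologicalSpace X] [TopologicalSpace Y] {s t : Set X}
    (hs : IsClosed s) (ht : IsClosed t) {f g : X → Y} (hf : ContinuousOn f s)
    (hg : ContinuousOn g t) (h : ∀ x ∈ s, x ∈ t → f x = g x) :
    ∃ F : X → Y, ContinuousOn F (s ∪ t) ∧ (∀ x ∈ s, F x = f x) ∧ (∀ x ∈ t, F x = g x) := by
  classical
  have h1 : ∀ x ∈ s, (fun x => if x ∈ s then f x else g x) x = f x := fun x hx => by simp [hx]
  have h2 : ∀ x ∈ t, (fun x => if x ∈ s then f x else g x) x = g x := by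
    intro x hx
    by_cases hxs : x ∈ s
    · simp [hxs, h x hxs hx]
    · simp [hxs]
  refine ⟨fun x => if x ∈ s then f x else g x, ?_, h1, h2⟩
  exact ContinuousOn.union_of_isClosed (hf.congr h1) (hg.congr h2) hs ht

theorem nr_cont {E : Type*} [NormedAddCommGroup E] [InnerProductSpace ℝ E]
    [FiniteDimensional ℝ E] (p : E) (R : ℝ) (hR : 0 < R) (f : E → E)
    (hf : ContinuousOn f (closedBall p R)) (h0 : ∀ z ∈ closedBall p R, f z ≠ 0)
    (hs : ∀ z ∈ sphere p R, f z = z - p) : False := by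
  rcases subsingleton_or_nontrivial E with hE | hE
  · exact h0 p (mem_closedBall_self hR.le) (Subsingleton.elim _ _)
  obtain ⟨g, hg, hg1, hg2⟩ := glue_cont (s := closedBall (0:E) (1/2)) (t := {z : E | 1/2 ≤ ‖z‖})
    (f := fun z => f (p + (2 * R) • z)) (g := fun z => (2 * R) • z) isClosed_closedBall
    (isClosed_le continuous_const continuous_norm)
    (hf.comp (by fun_prop) (by
      intro z hz
      rw [mem_closedBall_zero_iff] at hz
      rw [mem_closedBall, dist_eq_norm, add_sub_cancel_left, norm_smul, Real.norm_of_nonneg (by positivity)]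
      nlinarith))
    (by fun_prop) (by
      intro z hz hz'
      rw [mem_closedBall_zero_iff] at hz
      have h3 : ‖z‖ = 1/2 := le_antisymm hz hz'
      rw [hs, add_sub_cancel_left]
      rw [mem_sphere, dist_eq_norm, add_sub_cancel_left, norm_smul, Real.norm_of_nonneg (by positivity), h3]
      ring)
  have hun : closedBall (0:E) (1/2) ∪ {z : E | 1/2 ≤ ‖z‖} = univ := by
    ext z; simp [le_total]
  rw [hun, continuousOn_univ] at hg
  have hgne : ∀ z, g z ≠ 0 := by
    intro z
    rcases le_total ‖z‖ (1/2) with h | h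
    · rw [hg1 z (mem_closedBall_zero_iff.2 h)]
      apply h0
      rw [mem_closedBall, dist_eq_norm, add_sub_cancel_left, norm_smul, Real.norm_of_nonneg (by positivity)]
      nlinarith
    · rw [hg2 z h]
      refine smul_ne_zero (by positivity) ?_
      rw [← norm_pos_iff]; linarith
  obtain ⟨G, hG, hGd, hGe, -⟩ := hg.exists_contDiff_approx_and_eqOn 1 (ε := fun z => ‖g z‖) hg.norm
    (fun z => norm_pos_iff.2 (hgne z)) (S := {z : E | 1 ≤ ‖z‖}) (U := {z : E | 1/2 < ‖z‖})
    (isClosed_le continuous_const continuous_norm)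
    ((isOpen_lt continuous_const continuous_norm).mem_nhdsSet.2 (by
      intro z hz; simp only [mem_ofPred_eq] at *; linarith))
    (ContDiffOn.congr (f := fun z => (2 * R) • z) (by fun_prop) (fun z hz => hg2 z (le_of_lt (show 1/2 < ‖z‖ from hz) : 1/2 ≤ ‖z‖)))
  have hG0 : ∀ z, G z ≠ 0 := by
    intro z h
    have := hGd z
    rw [h, dist_zero_left] at this
    exact lt_irrefl _ this
  refine nr_smooth (fun z => ‖G z‖⁻¹ • G z) ?_ ?_ ?_
  · exact ((hG.norm ℝ hG0).inv (fun z => norm_ne_zero_iff.2 (hG0 z))).smul hG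
  · intro z
    rw [norm_smul, norm_inv, norm_norm, inv_mul_cancel₀ (norm_ne_zero_iff.2 (hG0 z))]
  · intro z hz
    have h3 : G z = (2 * R) • z := by
      rw [hGe (show z ∈ {z : E | 1 ≤ ‖z‖} from hz.ge), hg2 z (by simp [hz]; norm_num)]
    simp only [h3, norm_smul, hz, smul_smul, mul_one, Real.norm_of_nonneg (show 0 ≤ 2 * R by positivity)]
    rw [inv_mul_cancel₀ (by positivity), one_smul]

/-- A continuous map close to the identity on a closed ball has a zero. -/
lemma near_id_zero {E : Type*} [NormedAddCommGroup E] [InnerProductSpace ℝ E]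
    [FiniteDimensional ℝ E] (p : E) (R : ℝ) (hR : 0 < R) (g : E → E)
    (hg : ContinuousOn g (closedBall p R)) (h : ∀ z ∈ closedBall p R, ‖g z - (z - p)‖ ≤ R / 4) :
    ∃ z ∈ closedBall p R, g z = 0 := by
  by_contra hne
  push Not at hne
  let c : E → ℝ := fun z => max 0 (min 1 (2 - 2 * ‖z - p‖ / R))
  have hc0 : ∀ z, 0 ≤ c z := fun z => le_max_left _ _
  have hc1 : ∀ z, c z ≤ 1 := fun z => max_le zero_le_one (min_le_left _ _)
  refine nr_cont p R hR (fun z => (z - p) + c z • (g z - (z - p))) ?_ ?_ ?_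
  · have : Continuous c := by fun_prop
    have := this.continuousOn (s := closedBall p R)
    fun_prop
  · intro z hz h3
    have h4 : ‖z - p‖ ≤ R / 4 := by
      rw [eq_neg_of_add_eq_zero_left h3, norm_neg, norm_smul, Real.norm_of_nonneg (hc0 z)]
      calc _ ≤ 1 * (R/4) := mul_le_mul (hc1 z) (h z hz) (norm_nonneg _) zero_le_one
        _ = R/4 := one_mul _
    have h5 : c z = 1 := by
      have : 2 * ‖z - p‖ / R ≤ 1 := by rw [div_le_one hR]; linarith
      simp only [c]
      rw [min_eq_left (by linarith)]; simp
    rw [h5, one_smul, add_sub_cancel] at h3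
    exact hne z hz h3
  · intro z hz
    rw [mem_sphere, dist_eq_norm] at hz
    have : c z = 0 := by
      simp only [c, hz]
      rw [mul_div_assoc, div_self hR.ne']; norm_num
    simp [this]

lemma tietze_on {X F : Type*} [TopologicalSpace X] [NormalSpace X] [NormedAddCommGroup F]
    [NormedSpace ℝ F] [FiniteDimensional ℝ F] {s : Set X} (hs : IsClosed s) {f : X → F}
    (hf : ContinuousOn f s) : ∃ g : X → F, Continuous g ∧ ∀ x ∈ s, g x = f x := by
  have : TietzeExtension F := RCLike.instTietzeExtensionTVS (𝕜 := ℝ)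
  obtain ⟨g, hg⟩ := ContinuousMap.exists_restrict_eq hs ⟨s.domRestrict f, hf.domRestrict⟩
  refine ⟨g, g.continuous, fun x hx => ?_⟩
  exact congrArg (fun k => k ⟨x, hx⟩) hg

/-- Invariance of dimension. -/
lemma inv_dim {E F : Type*} [NormedAddCommGroup E] [InnerProductSpace ℝ E]
    [FiniteDimensional ℝ E] [NormedAddCommGroup F] [InnerProductSpace ℝ F]
    [FiniteDimensional ℝ F] (p : E) (R : ℝ) (hR : 0 < R) (f : E → F)
    (hf : ContinuousOn f (closedBall p R)) (hinj : InjOn f (closedBall p R)) :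
    Module.finrank ℝ E ≤ Module.finrank ℝ F := by
  by_contra hlt
  push Not at hlt
  have hcomp := isCompact_closedBall p R
  -- continuous left inverse on the image
  have hk : IsClosed (f '' closedBall p R) := (hcomp.image_of_continuousOn hf).isClosed
  let inv : F → E := Function.invFunOn f (closedBall p R)
  have hinv : ∀ z ∈ closedBall p R, inv (f z) = z := fun z hz => hinj.leftInvOn_invFunOn hz
  have hinvc : ContinuousOn inv (f '' closedBall p R) := by
    rw [continuousOn_iff_isClosed]
    intro t ht
    refine ⟨f '' (closedBall p R ∩ t), ((hcomp.inter_right ht).image_of_continuousOn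
      (hf.mono inter_subset_left)).isClosed, ?_⟩
    ext w
    constructor
    · rintro ⟨hw, z, hz, rfl⟩
      rw [mem_preimage, hinv z hz] at hw
      exact ⟨⟨z, ⟨hz, hw⟩, rfl⟩, z, hz, rfl⟩
    · rintro ⟨⟨z, ⟨hz, hzt⟩, rfl⟩, -⟩
      exact ⟨by rw [mem_preimage, hinv z hz]; exact hzt, z, hz, rfl⟩
  obtain ⟨G, hG, hGe⟩ := tietze_on hk hinvc
  obtain ⟨H, hH, hHd, -⟩ := hG.exists_contDiff_approx 1 (ε := fun _ => R/8) continuous_const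
    (fun _ => by positivity)
  have hdense := hH.dense_compl_range_of_finrank_lt_finrank hlt
  obtain ⟨c, hc, hcd⟩ := hdense.exists_dist_lt p (show 0 < R/8 by positivity)
  obtain ⟨z, hz, h0⟩ := near_id_zero p R hR (fun z => H (f z) - c)
    ((hH.continuous.comp_continuousOn hf).sub continuousOn_const) (by
      intro z hz
      have h1 := hHd (f z)
      rw [hGe _ ⟨z, hz, rfl⟩, hinv z hz, dist_eq_norm] at h1
      rw [dist_eq_norm] at hcd
      have : H (f z) - c - (z - p) = (H (f z) - z) + (p - c) := by abel
      rw [this]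
      refine (norm_add_le _ _).trans ?_
      linarith)
  exact hc ⟨f z, sub_eq_zero.1 h0⟩

/-- Homotopy extension for nonvanishing maps. -/
lemma hep {E F : Type*} [NormedAddCommGroup E] [NormedAddCommGroup F]
    [NormedSpace ℝ F] [FiniteDimensional ℝ F] {Y K : Set E} (hY : IsCompact Y) (hK : IsCompact K)
    (H : E × ℝ → F) (hH : ContinuousOn H (K ×ˢ Icc 0 1))
    (hH0 : ∀ z ∈ K, ∀ t ∈ Icc (0:ℝ) 1, H (z, t) ≠ 0)
    (hF : ∃ F1 : E → F, ContinuousOn F1 Y ∧ (∀ z ∈ Y, F1 z ≠ 0) ∧ ∀ z ∈ K, F1 z = H (z, 1)) :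
    ∃ F0 : E → F, ContinuousOn F0 Y ∧ (∀ z ∈ Y, F0 z ≠ 0) ∧ ∀ z ∈ K, F0 z = H (z, 0) := by
  obtain ⟨F1, hF1, hF10, hF1e⟩ := hF
  have hc1 : IsClosed (K ×ˢ Icc (0:ℝ) 1) := (hK.prod isCompact_Icc).isClosed
  have hc2 : IsClosed (Y ×ˢ ({1} : Set ℝ)) := (hY.prod isCompact_singleton).isClosed
  obtain ⟨Φ, hΦ, hΦ1, hΦ2⟩ := glue_cont hc1 hc2 hH
    (g := fun q => F1 q.1) (hF1.comp continuousOn_fst (fun q hq => hq.1)) (by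
      rintro ⟨z, t⟩ hz ⟨-, ht⟩
      simp only [mem_singleton_iff] at ht
      subst ht
      exact (hF1e z hz.1).symm)
  obtain ⟨Ψ, hΨ, hΨe⟩ := tietze_on (hc1.union hc2) hΦ
  have hN : IsOpen {q | Ψ q ≠ 0} := isOpen_ne_fun hΨ continuous_const
  obtain ⟨U, V, hU, hV, hKU, hIV, hUV⟩ := generalized_tube_lemma hK (isCompact_Icc (a := (0:ℝ)) (b := 1)) hN
    (by
      rintro ⟨z, t⟩ ⟨hz, ht⟩
      simp only [mem_ofPred_eq]
      rw [hΨe _ (Or.inl ⟨hz, ht⟩), hΦ1 _ ⟨hz, ht⟩]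
      exact hH0 z hz t ht)
  obtain ⟨u, hu0, hu1, hu⟩ := exists_continuous_zero_one_of_isClosed hK.isClosed hU.isClosed_compl
    (disjoint_compl_right_iff_subset.2 hKU)
  refine ⟨fun z => Ψ (z, u z), (hΨ.comp (by fun_prop)).continuousOn, ?_, ?_⟩
  · intro z hz
    by_cases hzU : z ∈ U
    · exact hUV (mk_mem_prod hzU (hIV (hu z)))
    · have : u z = 1 := hu1 hzU
      simp only [this]
      have hm : (z, (1:ℝ)) ∈ Y ×ˢ ({1} : Set ℝ) := mk_mem_prod hz (mem_singleton _)
      rw [hΨe _ (Or.inr hm), hΦ2 _ hm]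
      exact hF10 z hz
  · intro z hz
    have : u z = 0 := hu0 hz
    simp only [this]
    rw [hΨe _ (Or.inl ⟨hz, by simp⟩), hΦ1 _ ⟨hz, by simp⟩]

end NR2

section NR3
open Metric Topology Filter

lemma core_clopen {E F : Type*} [NormedAddCommGroup E] [InnerProductSpace ℝ E]
    [FiniteDimensional ℝ E] [NormedAddCommGroup F] [NormedSpace ℝ F]
    (x0 : E) (O Z V : Set E) (hV : V ∈ 𝓝 x0) (hO : IsOpen O) (hOZ : ∀ z ∈ O, z ∉ Z)
    (hfr : ∀ z ∈ V, z ∈ closure O → z ∈ O ∨ z ∈ Z) (h : E → F) (k : F → E) (s : ℝ) (hs : 0 < s)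
    (hh : ContinuousOn h (Z ∩ V)) (hk : ContinuousOn k (ball (h x0) s))
    (hkZ : ∀ w ∈ ball (h x0) s, k w ∈ Z)
    (hkh : ∀ z ∈ Z ∩ V, h z ∈ ball (h x0) s → k (h z) = z)
    (hhk : ∀ w ∈ ball (h x0) s, k w ∈ V → h (k w) = w)
    (hxZ : x0 ∈ Z) (hxO : x0 ∈ closure O) : ∀ᶠ y in 𝓝 x0, y ∈ Z → y ∈ closure O := by
  have hxV : x0 ∈ V := mem_of_mem_nhds hV
  have hhx : ContinuousWithinAt h Z x0 := by
    have := hh x0 ⟨hxZ, hxV⟩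
    rwa [ContinuousWithinAt, inter_comm, nhdsWithin_inter_of_mem (mem_nhdsWithin_of_mem_nhds hV)] at this
  have hball : ∀ ε > 0, ∃ δ > 0, ∀ z ∈ Z, z ∈ ball x0 δ → h z ∈ ball (h x0) ε := by
    intro ε hε
    obtain ⟨δ, hδ, H⟩ := Metric.continuousWithinAt_iff.1 hhx ε hε
    exact ⟨δ, hδ, fun z hz hz' => H hz hz'⟩
  obtain ⟨R, hR, hRV, hRh⟩ : ∃ R > 0, ball x0 R ⊆ V ∧ ∀ z ∈ Z, z ∈ ball x0 R → h z ∈ ball (h x0) s := by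
    obtain ⟨δ, hδ, H⟩ := hball s hs
    obtain ⟨ε, hε, H'⟩ := Metric.mem_nhds_iff.1 hV
    exact ⟨min δ ε, lt_min hδ hε, (ball_subset_ball (min_le_right _ _)).trans H',
      fun z hz hz' => H z hz (ball_subset_ball (min_le_left _ _) hz')⟩
  have hkx : k (h x0) = x0 := hkh x0 ⟨hxZ, hxV⟩ (mem_ball_self hs)
  obtain ⟨s1, hs1, hs1s, hs1k⟩ : ∃ s1 > 0, s1 ≤ s ∧ ∀ w ∈ ball (h x0) s1, k w ∈ ball x0 (R/2) := by
    have hc : ContinuousAt k (h x0) := hk.continuousAt (isOpen_ball.mem_nhds (mem_ball_self hs))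
    obtain ⟨δ, hδ, H⟩ := Metric.continuousAt_iff.1 hc (R/2) (by positivity)
    refine ⟨min δ s, lt_min hδ hs, min_le_right _ _, fun w hw => ?_⟩
    have := H (ball_subset_ball (min_le_left _ _) hw)
    rwa [hkx] at this
  obtain ⟨r, hr, hrR, hrh⟩ : ∃ r > 0, r ≤ R/8 ∧ ∀ z ∈ Z, z ∈ ball x0 r → h z ∈ ball (h x0) (s1/4) := by
    obtain ⟨δ, hδ, H⟩ := hball (s1/4) (by positivity)
    exact ⟨min δ (R/8), lt_min hδ (by positivity), min_le_right _ _,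
      fun z hz hz' => H z hz (ball_subset_ball (min_le_left _ _) hz')⟩
  filter_upwards [ball_mem_nhds x0 hr] with y hy hyZ
  by_contra hyO
  obtain ⟨p, hp, hpO⟩ := mem_closure_iff.1 hxO (ball x0 r) isOpen_ball (mem_ball_self hr)
  have hpx : dist p x0 < r := hp
  have hyx : dist y x0 < r := hy
  set R' := 3 * R / 4 with hR'
  have hR'0 : 0 < R' := by positivity
  have hBR : ∀ z ∈ closedBall p R', z ∈ ball x0 R := by
    intro z hz
    rw [mem_closedBall] at hz
    rw [mem_ball]
    have := dist_triangle z p x0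
    linarith
  set Y := closure O ∩ closedBall p R' with hY
  set K := Y \ O with hKdef
  set S := Y ∩ sphere p R' with hSdef
  have hYc : IsCompact Y := (isCompact_closedBall p R').inter_left isClosed_closure
  have hKc : IsCompact K := hYc.diff hO
  have hSc : IsCompact S := hYc.inter_right isClosed_sphere
  have hKZ : ∀ z ∈ K, z ∈ Z := fun z hz =>
    (hfr z (hRV (hBR z hz.1.2)) hz.1.1).resolve_left hz.2
  have hKh : ∀ z ∈ K, h z ∈ ball (h x0) s := fun z hz => hRh z (hKZ z hz) (hBR z hz.1.2)
  set a := h y with ha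
  have hyV : y ∈ V := hRV (ball_subset_ball (by linarith) hy)
  have hax : dist a (h x0) < s1/4 := hrh y hyZ hy
  have hyk : k a = y := hkh y ⟨hyZ, hyV⟩ (by rw [mem_ball]; linarith)
  have hKa : ∀ z ∈ K, h z ≠ a := by
    intro z hz he
    have h1 := hkh z ⟨hKZ z hz, hRV (hBR z hz.1.2)⟩ (hKh z hz)
    rw [he, hyk] at h1
    rw [← h1] at hz
    exact hyO hz.1.1
  let ρ : ℝ → F → F := fun t w => a + (max ‖w - a‖ (t * (s1/2)) / ‖w - a‖) • (w - a)
  have hρn : ∀ t w, w ≠ a → 0 ≤ t → ‖ρ t w - a‖ = max ‖w - a‖ (t * (s1/2)) := by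
    intro t w hw ht
    have h1 : ‖w - a‖ ≠ 0 := norm_ne_zero_iff.2 (sub_ne_zero.2 hw)
    simp only [ρ, add_sub_cancel_left]
    rw [norm_smul, Real.norm_of_nonneg (by positivity), div_mul_cancel₀ _ h1]
  have hρid : ∀ t w, w ≠ a → t * (s1/2) ≤ ‖w - a‖ → ρ t w = w := by
    intro t w hw ht
    have h1 : ‖w - a‖ ≠ 0 := norm_ne_zero_iff.2 (sub_ne_zero.2 hw)
    simp only [ρ]
    rw [max_eq_left ht, div_self h1, one_smul, add_sub_cancel]
  have hρne : ∀ t w, w ≠ a → 0 ≤ t → ρ t w ≠ a := by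
    intro t w hw ht he
    have h1 := hρn t w hw ht
    rw [he, sub_self, norm_zero] at h1
    have h2 : 0 < ‖w - a‖ := norm_pos_iff.2 (sub_ne_zero.2 hw)
    have := le_max_left ‖w - a‖ (t * (s1/2))
    linarith
  have hρs : ∀ t ∈ Icc (0:ℝ) 1, ∀ w ∈ ball (h x0) s, w ≠ a → ρ t w ∈ ball (h x0) s := by
    intro t ht w hw hwa
    by_cases hc : t * (s1/2) ≤ ‖w - a‖
    · rw [hρid t w hwa hc]; exact hw
    · push Not at hc
      have h1 := hρn t w hwa ht.1
      rw [max_eq_right hc.le] at h1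
      have h2 : t * (s1/2) ≤ s1/2 := by nlinarith [ht.2]
      rw [mem_ball]
      have h3 := dist_triangle (ρ t w) a (h x0)
      rw [dist_eq_norm (ρ t w) a] at h3
      linarith
  -- the homotopy
  have hI : IsCompact (Icc (0:ℝ) 1) := isCompact_Icc
  obtain ⟨κ, hκ, hκK, hκS⟩ := glue_cont (s := K ×ˢ Icc (0:ℝ) 1) (t := S ×ˢ Icc (0:ℝ) 1)
    (f := fun q : E × ℝ => k (ρ q.2 (h q.1))) (g := fun q : E × ℝ => q.1)
    (hKc.prod hI).isClosed (hSc.prod hI).isClosed (by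
      refine hk.comp ?_ ?_
      · have hc : ContinuousOn (fun q : E × ℝ => h q.1) (K ×ˢ Icc (0:ℝ) 1) :=
          hh.comp continuousOn_fst (fun q hq => ⟨hKZ _ hq.1, hRV (hBR _ hq.1.1.2)⟩)
        have hc2 : ContinuousOn (fun q : E × ℝ => ‖h q.1 - a‖) (K ×ˢ Icc (0:ℝ) 1) :=
          (hc.sub continuousOn_const).norm
        refine continuousOn_const.add (ContinuousOn.smul (ContinuousOn.div ?_ hc2 ?_)
          (hc.sub continuousOn_const))
        · exact hc2.sup (by fun_prop)
        · intro q hq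
          exact norm_ne_zero_iff.2 (sub_ne_zero.2 (hKa _ hq.1))
      · intro q hq
        exact hρs _ hq.2 _ (hKh _ hq.1) (hKa _ hq.1)) continuousOn_fst (by
    rintro ⟨z, t⟩ ⟨hzK, ht⟩ ⟨hzS, -⟩
    simp only at *
    have hz : dist z p = R' := hzS.2
    have h1 : s1 ≤ dist (h z) (h x0) := by
      by_contra hlt
      push Not at hlt
      have h2 := hs1k (h z) hlt
      rw [hkh z ⟨hKZ z hzK, hRV (hBR z hzK.1.2)⟩ (hKh z hzK), mem_ball] at h2
      have := dist_triangle z x0 p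
      rw [dist_comm x0 p] at this
      linarith
    have h3 : s1/2 ≤ ‖h z - a‖ := by
      rw [← dist_eq_norm]
      have := dist_triangle (h z) a (h x0)
      linarith
    rw [hρid t (h z) (hKa z hzK) (by nlinarith [ht.2])]
    exact hkh z ⟨hKZ z hzK, hRV (hBR z hzK.1.2)⟩ (hKh z hzK))
  rw [← union_prod] at hκ
  have hκ0 : ∀ z ∈ K ∪ S, κ (z, 0) = z := by
    rintro z (hz | hz)
    · rw [hκK (z, 0) ⟨hz, by simp⟩]
      simp only
      rw [hρid 0 (h z) (hKa z hz) (by simp)]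
      exact hkh z ⟨hKZ z hz, hRV (hBR z hz.1.2)⟩ (hKh z hz)
    · rw [hκS (z, 0) ⟨hz, by simp⟩]
  have hpZ : p ∉ Z := hOZ p hpO
  have hκp : ∀ z ∈ K ∪ S, ∀ t ∈ Icc (0:ℝ) 1, κ (z, t) - p ≠ 0 := by
    rintro z (hz | hz) t ht h0
    · rw [hκK (z, t) ⟨hz, ht⟩, sub_eq_zero] at h0
      exact hpZ (h0 ▸ hkZ _ (hρs t ht _ (hKh z hz) (hKa z hz)))
    · rw [hκS (z, t) ⟨hz, ht⟩] at h0
      simp only at h0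
      have : dist z p = R' := hz.2
      rw [dist_eq_norm, h0, norm_zero] at this
      linarith
  have hκy : ∀ z ∈ K ∪ S, ∀ t ∈ Icc (0:ℝ) 1, κ (z, t) - y ≠ 0 := by
    rintro z (hz | hz) t ht h0
    · rw [hκK (z, t) ⟨hz, ht⟩, sub_eq_zero] at h0
      simp only at h0
      have h1 := hhk _ (hρs t ht _ (hKh z hz) (hKa z hz)) (h0 ▸ hyV)
      rw [h0] at h1
      exact hρne t (h z) (hKa z hz) ht.1 h1.symm
    · rw [hκS (z, t) ⟨hz, ht⟩] at h0
      exact hyO (sub_eq_zero.1 h0 ▸ hz.1.1)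
  have hκr : ∀ z ∈ K ∪ S, κ (z, 1) ∉ ball x0 r := by
    rintro z (hz | hz) hm
    · have h1m : (1:ℝ) ∈ Icc (0:ℝ) 1 := by simp
      rw [hκK (z, 1) ⟨hz, h1m⟩] at hm
      simp only at hm
      have hsb := hρs 1 h1m _ (hKh z hz) (hKa z hz)
      have h1 := hhk _ hsb (hRV (ball_subset_ball (by linarith) hm))
      have h2 := hrh _ (hkZ _ hsb) hm
      rw [h1, mem_ball] at h2
      have h3 := hρn 1 (h z) (hKa z hz) zero_le_one
      have h4 := le_max_right ‖h z - a‖ (1 * (s1/2))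
      rw [← h3, ← dist_eq_norm] at h4
      have := dist_triangle_right (ρ 1 (h z)) a (h x0)
      linarith
    · rw [hκS (z, 1) ⟨hz, by simp⟩, mem_ball] at hm
      simp only at hm
      have h1 : dist z p = R' := hz.2
      have := dist_triangle_right z p x0
      linarith
  have hK'c : IsCompact (K ∪ S) := hKc.union hSc
  have hmap : ∀ g : ℝ → ℝ, Continuous g → (∀ t ∈ Icc (0:ℝ) 1, g t ∈ Icc (0:ℝ) 1) →
      ContinuousOn (fun q : E × ℝ => κ (q.1, g q.2)) ((K ∪ S) ×ˢ Icc (0:ℝ) 1) := by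
    intro g hg hgm
    exact hκ.comp (by fun_prop) (fun q hq => mk_mem_prod hq.1 (hgm _ hq.2))
  have st1 := hep hYc hK'c (fun q : E × ℝ => κ (q.1, 1 - q.2) - y)
    ((hmap (fun t => 1 - t) (by fun_prop) (fun t ht => ⟨by linarith [ht.2], by linarith [ht.1]⟩)).sub
      continuousOn_const)
    (fun z hz t ht => hκy z hz (1 - t) ⟨by linarith [ht.2], by linarith [ht.1]⟩)
    ⟨fun z => z - y, by fun_prop, fun z hz h0 => hyO (sub_eq_zero.1 h0 ▸ hz.1), fun z hz => by
      simp [hκ0 z hz]⟩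
  have st2 := hep hYc hK'c (fun q : E × ℝ => κ (q.1, 1) - (p + q.2 • (y - p)))
    ((hmap (fun t => 1) (by fun_prop) (fun t ht => by simp)).sub (by fun_prop))
    (fun z hz t ht h0 => by
      refine hκr z hz ?_
      simp only at h0
      rw [sub_eq_zero.1 h0]
      exact (convex_ball x0 r).add_smul_sub_mem hp hy ht)
    (by simpa using st1)
  have st3 := hep hYc hK'c (fun q : E × ℝ => κ (q.1, q.2) - p)
    ((hmap (fun t => t) (by fun_prop) (fun t ht => ht)).sub continuousOn_const)
    (fun z hz t ht => hκp z hz t ht)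
    (by simpa using st2)
  obtain ⟨F0, hF0, hF0n, hF0e⟩ := st3
  obtain ⟨G, hG, hG1, hG2⟩ := glue_cont (s := Y) (t := closedBall p R' ∩ Oᶜ) (f := F0)
    (g := fun z => z - p) hYc.isClosed (isClosed_closedBall.inter hO.isClosed_compl) hF0
    (by fun_prop) (by
      rintro z hz ⟨-, hzO⟩
      rw [hF0e z (Or.inl ⟨hz, hzO⟩)]
      simp only
      rw [hκ0 z (Or.inl ⟨hz, hzO⟩)])
  have hcov : closedBall p R' ⊆ Y ∪ (closedBall p R' ∩ Oᶜ) := by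
    intro z hz
    by_cases hzO : z ∈ O
    · exact Or.inl ⟨subset_closure hzO, hz⟩
    · exact Or.inr ⟨hz, hzO⟩
  refine nr_cont p R' hR'0 G (hG.mono hcov) ?_ ?_
  · intro z hz
    rcases hcov hz with h1 | h1
    · rw [hG1 z h1]; exact hF0n z h1
    · rw [hG2 z h1]
      intro h0
      exact h1.2 (sub_eq_zero.1 h0 ▸ hpO)
  · intro z hz
    rcases hcov (sphere_subset_closedBall hz) with h1 | h1
    · rw [hG1 z h1, hF0e z (Or.inr ⟨h1, hz⟩)]
      simp only
      rw [hκ0 z (Or.inr ⟨h1, hz⟩)]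
    · exact hG2 z h1

end NR3

section NR4
open Metric Topology Filter

lemma chart_data {E H : Type*} [TopologicalSpace E] [TopologicalSpace H] [Zero H] (X : Set E)
    (c : ChartedSpace H X) (x : E) (hx : x ∈ X) :
    ∃ (φ : E → H) (e : H → E) (U : Set E) (W : Set H), IsOpen U ∧ x ∈ U ∧ IsOpen W ∧
      ContinuousOn φ (X ∩ U) ∧ ContinuousOn e W ∧ (∀ y ∈ X ∩ U, φ y ∈ W ∧ e (φ y) = y) ∧
      (∀ w ∈ W, e w ∈ X ∩ U ∧ φ (e w) = w) := by
  classical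
  let a := chartAt H (⟨x, hx⟩ : X)
  obtain ⟨U, hU, hUa⟩ := isOpen_induced_iff.1 a.open_source
  have hsrc : ∀ y (hy : y ∈ X), y ∈ U → (⟨y, hy⟩ : X) ∈ a.source := by
    intro y hy hyU
    rw [← hUa]; exact hyU
  refine ⟨fun y => if h : y ∈ X then a ⟨y, h⟩ else 0, fun w => (a.symm w : X), U, a.target,
    hU, ?_, a.open_target, ?_, ?_, ?_, ?_⟩
  · have : (⟨x, hx⟩ : X) ∈ a.source := mem_chart_source H _
    rw [← hUa] at this; exact this
  · rw [continuousOn_iff_continuous_domRestrict]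
    have h1 : ContinuousOn a a.source := a.continuousOn
    have h2 : Continuous (fun y : ↥(X ∩ U) => (⟨y.1, y.2.1⟩ : X)) := by fun_prop
    have h3 := h1.comp_continuous h2 (fun y => hsrc _ y.2.1 y.2.2)
    refine h3.congr (fun y => ?_)
    simp [y.2.1]
  · exact continuous_subtype_val.comp_continuousOn a.continuousOn_symm
  · rintro y ⟨hy, hyU⟩
    simp only [hy, dif_pos]
    exact ⟨a.map_source (hsrc y hy hyU), by rw [a.left_inv (hsrc y hy hyU)]⟩
  · intro w hw
    have h1 : a.symm w ∈ a.source := a.map_target hw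
    refine ⟨⟨(a.symm w).2, ?_⟩, ?_⟩
    · rw [← hUa] at h1; exact h1
    · simp [a.right_inv hw]

/-- `O` is relatively open in `X`. -/
def RelOpen {E : Type*} [TopologicalSpace E] (O X : Set E) : Prop :=
  ∀ x ∈ O, ∀ᶠ y in 𝓝 x, y ∈ X → y ∈ O

lemma dim_le' {E H H' : Type*} [TopologicalSpace E] [NormedAddCommGroup H] [InnerProductSpace ℝ H]
    [FiniteDimensional ℝ H] [NormedAddCommGroup H'] [InnerProductSpace ℝ H']
    [FiniteDimensional ℝ H'] (S S' O : Set E) (c : ChartedSpace H S) (c' : ChartedSpace H' S')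
    (hO : O.Nonempty) (hOS : O ⊆ S) (hOS' : O ⊆ S') (hr : RelOpen O S') :
    Module.finrank ℝ H' ≤ Module.finrank ℝ H := by
  obtain ⟨x, hx⟩ := hO
  obtain ⟨φ, e, U, W, hU, hxU, hW, hφ, he, hl, hrr⟩ := chart_data S c x (hOS hx)
  obtain ⟨φ', e', U', W', hU', hxU', hW', hφ', he', hl', hr'⟩ := chart_data S' c' x (hOS' hx)
  obtain ⟨hxW', hxe'⟩ := hl' x ⟨hOS' hx, hxU'⟩
  have hc : ContinuousAt e' (φ' x) := he'.continuousAt (hW'.mem_nhds hxW')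
  have h1 : ∀ᶠ v in 𝓝 (φ' x), v ∈ W' ∧ e' v ∈ U ∧ (e' v ∈ S' → e' v ∈ O) := by
    rw [ContinuousAt, hxe'] at hc
    exact (hW'.eventually_mem hxW').and ((hc.eventually (hU.eventually_mem hxU)).and (hc.eventually (hr x hx)))
  obtain ⟨R, hR, hb⟩ := Metric.nhds_basis_closedBall.mem_iff.1 h1
  have hS : ∀ v ∈ closedBall (φ' x) R, v ∈ W' ∧ e' v ∈ S ∩ U := fun v hv =>
    have h2 := hb hv
    ⟨h2.1, hOS (h2.2.2 (hr' v h2.1).1.1), h2.2.1⟩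
  refine inv_dim (φ' x) R hR (fun v => φ (e' v)) ?_ ?_
  · exact hφ.comp (he'.mono fun v hv => (hS v hv).1) (fun v hv => (hS v hv).2)
  · intro v hv w hw hvw
    simp only at hvw
    have h3 : e' v = e' w := by
      rw [← (hl _ (hS v hv).2).2, hvw, (hl _ (hS w hw).2).2]
    rw [← (hr' v (hS v hv).1).2, h3, (hr' w (hS w hw).1).2]

lemma clopen_transfer {E H H' : Type*} [TopologicalSpace E] [NormedAddCommGroup H]
    [InnerProductSpace ℝ H]
    [FiniteDimensional ℝ H] [NormedAddCommGroup H'] [InnerProductSpace ℝ H']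
    (X Z O U : Set E) (c : ChartedSpace H X) (c' : ChartedSpace H' Z)
    (hZX : Z ⊆ X) (hOX : O ⊆ X) (hU : IsOpen U) (hr : RelOpen O X) (hd : ∀ z ∈ O, z ∉ Z)
    (hfr : ∀ z ∈ X, z ∈ U → z ∈ closure O → z ∈ O ∨ z ∈ Z)
    (x : E) (hxZ : x ∈ Z) (hxU : x ∈ U) (hxO : x ∈ closure O) :
    ∀ᶠ y in 𝓝 x, y ∈ Z → y ∈ closure O := by
  obtain ⟨φ, e, UX, W, hUX, hxUX, hW, hφ, he, hl, hrr⟩ := chart_data X c x (hZX hxZ)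
  obtain ⟨ψ, g, UZ, W2, hUZ, hxUZ, hW2, hψ, hg, hl2, hr2⟩ := chart_data Z c' x hxZ
  obtain ⟨hxW, hxe⟩ := hl x ⟨hZX hxZ, hxUX⟩
  obtain ⟨hxW2, hxg⟩ := hl2 x ⟨hxZ, hxUZ⟩
  have hce : ∀ v ∈ W, ContinuousAt e v := fun v hv => he.continuousAt (hW.mem_nhds hv)
  have hcg : ContinuousAt g (ψ x) := hg.continuousAt (hW2.mem_nhds hxW2)
  have hcφ : ContinuousWithinAt φ X x := by
    have := hφ x ⟨hZX hxZ, hxUX⟩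
    rwa [ContinuousWithinAt, inter_comm, nhdsWithin_inter_of_mem
      (mem_nhdsWithin_of_mem_nhds (hUX.mem_nhds hxUX))] at this
  have h1 : ∀ᶠ w in 𝓝 (ψ x), w ∈ W2 ∧ g w ∈ UX := by
    rw [ContinuousAt, hxg] at hcg
    exact (hW2.eventually_mem hxW2).and (hcg.eventually (hUX.eventually_mem hxUX))
  obtain ⟨s, hs, hb⟩ := Metric.nhds_basis_ball.mem_iff.1 h1
  have hV : ∀ᶠ v in 𝓝 (φ x), v ∈ W ∧ e v ∈ U ∧ e v ∈ UZ := by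
    have hc := hce _ hxW
    rw [ContinuousAt, hxe] at hc
    exact (hW.eventually_mem hxW).and ((hc.eventually (hU.eventually_mem hxU)).and
      (hc.eventually (hUZ.eventually_mem hxUZ)))
  have hOo : IsOpen {v | v ∈ W ∧ e v ∈ O} := by
    rw [isOpen_iff_mem_nhds]
    rintro v ⟨hv, hvO⟩
    have h2 : ∀ᶠ w in 𝓝 v, w ∈ W ∧ (e w ∈ X → e w ∈ O) :=
      (hW.eventually_mem hv).and ((hce v hv).eventually (hr _ hvO))
    filter_upwards [h2] with w hw
    exact ⟨hw.1, hw.2 (hrr w hw.1).1.1⟩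
  have hclos : ∀ v ∈ W, v ∈ closure {v | v ∈ W ∧ e v ∈ O} → e v ∈ closure O := by
    intro v hv hvc
    have := (hce v hv).continuousWithinAt.mem_closure hvc (t := O) (fun w hw => hw.2)
    exact this
  have hconc := core_clopen (φ x) {v | v ∈ W ∧ e v ∈ O} {v | v ∈ W ∧ e v ∈ Z}
    {v | v ∈ W ∧ e v ∈ U ∧ e v ∈ UZ} hV hOo (fun z hz hz' => hd _ hz.2 hz'.2)
    (by
      rintro z ⟨hzW, hzU, hzUZ⟩ hz
      rcases hfr (e z) (hrr z hzW).1.1 hzU (hclos z hzW hz) with h | h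
      · exact Or.inl ⟨hzW, h⟩
      · exact Or.inr ⟨hzW, h⟩)
    (fun v => ψ (e v)) (fun w => φ (g w)) s hs
    (hψ.comp (he.mono fun v hv => hv.1.1) (fun v hv => ⟨hv.1.2, hv.2.2.2⟩))
    (by
      simp only [hxe]
      exact hφ.comp (hg.mono fun v hv => (hb hv).1)
        (fun v hv => ⟨hZX (hr2 v (hb hv).1).1.1, (hb hv).2⟩))
    (by
      simp only [hxe]
      intro w hw
      have h2 := hl (g w) ⟨hZX (hr2 w (hb hw).1).1.1, (hb hw).2⟩
      exact ⟨h2.1, by rw [h2.2]; exact (hr2 w (hb hw).1).1.1⟩)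
    (by
      rintro z ⟨hz, hz'⟩ -
      rw [(hl2 (e z) ⟨hz.2, hz'.2.2⟩).2, (hrr z hz.1).2])
    (by
      simp only [hxe]
      intro w hw _
      have h2 := hl (g w) ⟨hZX (hr2 w (hb hw).1).1.1, (hb hw).2⟩
      rw [h2.2, (hr2 w (hb hw).1).2])
    ⟨hxW, by rw [hxe]; exact hxZ⟩
    (by
      have h3 : x ∈ closure (O ∩ UX) := by
        rw [inter_comm]
        exact hUX.inter_closure ⟨hxUX, hxO⟩
      have h4 : ContinuousWithinAt φ (O ∩ UX) x := hcφ.mono (fun y hy => hOX hy.1)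
      refine h4.mem_closure h3 ?_
      intro y hy
      have h5 := hl y ⟨hOX hy.1, hy.2⟩
      exact ⟨h5.1, by rw [h5.2]; exact hy.1⟩)
  have h6 := hcφ.eventually hconc
  rw [eventually_nhdsWithin_iff] at h6
  filter_upwards [h6, hUX.mem_nhds hxUX] with y hy hyU hyZ
  have h7 := hl y ⟨hZX hyZ, hyU⟩
  have h8 := hclos _ h7.1 (hy (hZX hyZ) ⟨h7.1, by rw [h7.2]; exact hyZ⟩)
  rwa [h7.2] at h8

end NR4

section NR5
open Metric Topology Filter

variable {N n : ℕ} {T : Set (Euc N)}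

lemma sim_dim_le {i j : ℕ} {S S' O : Set (Euc N)} (hS : IsSimanifold i S)
    (hS' : IsSimanifold j S') (hO : O.Nonempty) (hOS : O ⊆ S) (hOS' : O ⊆ S')
    (hr : RelOpen O S') : j ≤ i := by
  obtain ⟨c⟩ := hS.2.2
  obtain ⟨c'⟩ := hS'.2.2
  have := dim_le' S S' O c c' hO hOS hOS' hr
  simpa using this

lemma relOpen_self {E : Type*} [TopologicalSpace E] (S : Set E) : RelOpen S S :=
  fun _ _ => Eventually.of_forall fun _ h => h

lemma sdim_eq {i : ℕ} {S : Set (Euc N)} (hS : IsSimanifold i S) : sdim S = i := by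
  have hb : ∀ j ∈ {i | ∃ T : Set (Euc N), IsSimanifold i T ∧ T ⊆ S}, j ≤ i := by
    rintro j ⟨S', hS', hsub⟩
    exact sim_dim_le hS hS' hS'.1 hsub le_rfl (relOpen_self S')
  apply le_antisymm
  · exact csSup_le ⟨i, S, hS, le_rfl⟩ hb
  · exact le_csSup ⟨i, hb⟩ ⟨S, hS, le_rfl⟩

lemma sim_conn {i : ℕ} {S : Set (Euc N)} (hS : IsSimanifold i S) : IsPreconnected S := by
  have := hS.2.1
  have : PreconnectedSpace S := inferInstance
  exact isPreconnected_iff_preconnectedSpace.2 this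

lemma clopen_conn {E : Type*} [TopologicalSpace E] {X S : Set E} (hX : IsPreconnected X)
    (hS : S ⊆ X) (h1 : RelOpen S X) (h2 : RelOpen (X \ S) X) : S = ∅ ∨ S = X := by
  by_contra hcon
  push Not at hcon
  obtain ⟨a, ha⟩ := hcon.1
  obtain ⟨b, hb, hb'⟩ : ∃ b ∈ X, b ∉ S := by
    by_contra h; push Not at h
    exact hcon.2 (hS.antisymm h)
  obtain ⟨x, hx, hx1, hx2⟩ := hX {x | ∀ᶠ y in 𝓝 x, y ∈ X → y ∈ S}
    {x | ∀ᶠ y in 𝓝 x, y ∈ X → y ∈ X \ S} isOpen_setOfPred_eventually_nhds isOpen_setOfPred_eventually_nhds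
    (by
      intro x hx
      by_cases hxS : x ∈ S
      · exact Or.inl (h1 x hxS)
      · exact Or.inr (h2 x ⟨hx, hxS⟩)) ⟨a, hS ha, h1 a ha⟩ ⟨b, hb, h2 b ⟨hb, hb'⟩⟩
  exact (hx2.self_of_nhds hx).2 (hx1.self_of_nhds hx)

open Classical in
/-- sign of a point with respect to a dehyperplane -/
noncomputable def sg (P : Dehyperplane N n T) (x : Euc N) : SignType :=
  if x ∈ P.plus then 1 else if x ∈ P.minus then -1 else 0

lemma sg_pos (P : Dehyperplane N n T) (x : Euc N) : sg P x = 1 ↔ x ∈ P.plus := by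
  unfold sg; split_ifs <;> simp_all

lemma sg_neg (P : Dehyperplane N n T) (x : Euc N) : sg P x = -1 ↔ x ∈ P.minus := by
  have h1 : x ∈ P.plus → x ∉ P.minus := fun h => disjoint_left.1 P.disj_pm h
  unfold sg; split_ifs <;> simp_all

lemma sg_zero (P : Dehyperplane N n T) (x : Euc N) (hx : x ∈ T) : sg P x = 0 ↔ x ∈ P.P := by
  have h1 : x ∈ P.plus → x ∉ P.P := fun h => disjoint_left.1 P.disj_pP h
  have h2 : x ∈ P.P → x ∉ P.minus := fun h => disjoint_left.1 P.disj_Pm h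
  have hx' : x ∈ P.plus ∪ P.P ∪ P.minus := by rw [P.union_eq]; exact hx
  simp only [mem_union] at hx'
  unfold sg; split_ifs <;> simp_all

lemma part_iff (P : Dehyperplane N n T) (x : Euc N) (hx : x ∈ T) (ε : SignType) :
    x ∈ P.part ε ↔ sg P x = ε := by
  cases ε
  · exact (sg_zero P x hx).symm
  · exact (sg_neg P x).symm
  · exact (sg_pos P x).symm

lemma isClosed_P (P : Dehyperplane N n T) : IsClosed P.P := by
  rw [← P.closure_eq]; exact isClosed_closure.inter isClosed_closure

lemma P_sub (P : Dehyperplane N n T) : P.P ⊆ T := by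
  intro x hx; rw [← P.union_eq]; exact Or.inl (Or.inr hx)

lemma plus_sub (P : Dehyperplane N n T) : P.plus ⊆ T := by
  intro x hx; rw [← P.union_eq]; exact Or.inl (Or.inl hx)

lemma minus_sub (P : Dehyperplane N n T) : P.minus ⊆ T := by
  intro x hx; rw [← P.union_eq]; exact Or.inr hx

lemma sg_loc (P : Dehyperplane N n T) (x : Euc N) (hx : sg P x ≠ 0) (hxT : x ∈ T) :
    ∀ᶠ y in 𝓝 x, y ∈ T → sg P y = sg P x := by
  have hxP : x ∉ P.P := fun h => hx ((sg_zero P x hxT).2 h)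
  have e1 : ∀ᶠ y in 𝓝 x, y ∉ P.P := (isClosed_P P).isOpen_compl.eventually_mem hxP
  have hcase : sg P x = 1 ∨ sg P x = -1 := by
    revert hx; cases sg P x <;> decide
  rcases hcase with h | h
  · have hp := (sg_pos P x).1 h
    have hm : x ∉ closure P.minus := fun hc => hxP (P.closure_eq ▸ ⟨subset_closure hp, hc⟩)
    filter_upwards [e1, isClosed_closure.isOpen_compl.eventually_mem hm] with y hy1 hy2 hyT
    rw [h, sg_pos]
    rw [← P.union_eq] at hyT
    rcases hyT with (h | h) | h
    · exact h
    · exact absurd h hy1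
    · exact absurd (subset_closure h) hy2
  · have hp := (sg_neg P x).1 h
    have hm : x ∉ closure P.plus := fun hc => hxP (P.closure_eq ▸ ⟨hc, subset_closure hp⟩)
    filter_upwards [e1, isClosed_closure.isOpen_compl.eventually_mem hm] with y hy1 hy2 hyT
    rw [h, sg_neg]
    rw [← P.union_eq] at hyT
    rcases hyT with (h | h) | h
    · exact absurd (subset_closure h) hy2
    · exact absurd h hy1
    · exact h

lemma sg_closure (P : Dehyperplane N n T) {O : Set (Euc N)} {ε : SignType}
    (hO : ∀ y ∈ O, y ∈ T ∧ sg P y = ε) {z : Euc N} (hzT : z ∈ T) (hz : z ∈ closure O) :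
    sg P z = ε ∨ sg P z = 0 := by
  by_contra hcon
  push Not at hcon
  obtain ⟨y, hy, hyO⟩ := mem_closure_iff_nhds.1 hz _ (sg_loc P z hcon.2 hzT)
  have := hy (hO y hyO).1
  rw [(hO y hyO).2] at this
  exact hcon.1 this.symm

lemma const_of_disj (P : Dehyperplane N n T) {F : Set (Euc N)} (hF : IsPreconnected F)
    (hFT : F ⊆ T) (h0 : ∀ x ∈ F, sg P x ≠ 0) {x y : Euc N} (hx : x ∈ F) (hy : y ∈ F) :
    sg P y = sg P x := by
  rcases clopen_conn hF (S := {z | z ∈ F ∧ sg P z = sg P x}) (fun z hz => hz.1)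
    (by
      rintro z ⟨hz, hz'⟩
      filter_upwards [sg_loc P z (h0 z hz) (hFT hz)] with w hw hwF
      exact ⟨hwF, (hw (hFT hwF)).trans hz'⟩)
    (by
      rintro z ⟨hz, hz'⟩
      filter_upwards [sg_loc P z (h0 z hz) (hFT hz)] with w hw hwF
      refine ⟨hwF, fun hcon => hz' ⟨hz, ?_⟩⟩
      rw [← hw (hFT hwF)]; exact hcon.2) with h | h
  · exact absurd (show x ∈ {z | z ∈ F ∧ sg P z = sg P x} from ⟨hx, rfl⟩) (by rw [h]; simp)
  · rw [← h] at hy; exact hy.2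

variable {A : Set (Dehyperplane N n T)}

lemma flat_sub {X : Set (Euc N)} (hX : X ∈ flats A) : X ⊆ T := by
  obtain ⟨-, B, hB, rfl⟩ := hX
  exact inter_subset_left

lemma flat_inter {X : Set (Euc N)} (hX : X ∈ flats A) {P : Dehyperplane N n T} (hP : P ∈ A)
    (hne : (P.P ∩ X).Nonempty) : P.P ∩ X ∈ flats A := by
  obtain ⟨-, B, hB, rfl⟩ := hX
  refine ⟨hne, insert P B, insert_subset hP hB, ?_⟩
  rw [biInter_insert, inter_left_comm]

lemma flat_sim (hT : IsSimanifold n T) (hA : IsDA n T A) {X : Set (Euc N)} (hX : X ∈ flats A) :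
    IsSimanifold (sdim X) X := by
  suffices h : ∃ i, IsSimanifold i X by
    obtain ⟨i, hi⟩ := h
    rwa [sdim_eq hi]
  obtain ⟨hne, B, hB, rfl⟩ := hX
  have hBf := hA.1.subset hB
  induction B, hBf using Set.Finite.induction_on with
  | empty => exact ⟨n, by simpa using hT⟩
  | @insert Q B hQ hBf ih =>
    have hQA : Q ∈ A := hB (mem_insert _ _)
    have hBA : B ⊆ A := (subset_insert _ _).trans hB
    rw [biInter_insert, inter_left_comm] at hne ⊢
    have hne' : (T ∩ ⋂ P ∈ B, P.P).Nonempty := hne.mono inter_subset_right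
    rcases hA.2 Q hQA _ ⟨hne', B, hBA, rfl⟩ hne with h | ⟨i, -, -, hi, -⟩
    · rw [inter_eq_right.2 h]
      exact ih hBA hne'
    · exact ⟨_, hi⟩

/-- the open half of `X`. -/
def half (P : Dehyperplane N n T) (ε : SignType) (X : Set (Euc N)) : Set (Euc N) :=
  {x | x ∈ X ∧ sg P x = ε}

lemma half_zero (P : Dehyperplane N n T) {X : Set (Euc N)} (hX : X ⊆ T) :
    half P 0 X = P.P ∩ X := by
  ext x
  constructor
  · rintro ⟨h, h'⟩; exact ⟨(sg_zero P x (hX h)).1 h', h⟩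
  · rintro ⟨h, h'⟩; exact ⟨h', (sg_zero P x (hX h')).2 h⟩

lemma half_relopen (P : Dehyperplane N n T) {X : Set (Euc N)} (hX : X ⊆ T) {ε : SignType}
    (hε : ε ≠ 0) : RelOpen (half P ε X) X := by
  rintro x ⟨hx, h⟩
  filter_upwards [sg_loc P x (h ▸ hε) (hX hx)] with y hy hyX
  exact ⟨hyX, (hy (hX hyX)).trans h⟩

lemma flat_key (hT : IsSimanifold n T) (hA : IsDA n T A) {X : Set (Euc N)} (hX : X ∈ flats A)
    {P : Dehyperplane N n T} (hP : P ∈ A) (hne : (P.P ∩ X).Nonempty) (hnot : ¬ X ⊆ P.P) :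
    1 ≤ sdim X ∧ IsSimanifold (sdim X - 1) (P.P ∩ X) ∧
      ∀ ε : SignType, ε ≠ 0 → IsSimanifold (sdim X) (half P ε X) := by
  rcases hA.2 P hP X hX hne with h | ⟨i, h1, -, h2, h3, h4⟩
  · exact absurd h hnot
  have e1 : P.plus ∩ X = half P 1 X := by
    ext x; exact ⟨fun h => ⟨h.2, (sg_pos P x).2 h.1⟩, fun h => ⟨(sg_pos P x).1 h.2, h.1⟩⟩
  have e2 : P.minus ∩ X = half P (-1) X := by
    ext x; exact ⟨fun h => ⟨h.2, (sg_neg P x).2 h.1⟩, fun h => ⟨(sg_neg P x).1 h.2, h.1⟩⟩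
  rw [e1] at h3
  rw [e2] at h4
  have hXs := flat_sim hT hA hX
  have hsub : half P 1 X ⊆ X := fun x hx => hx.1
  have hi : i = sdim X := le_antisymm
    (sim_dim_le hXs h3 h3.1 hsub le_rfl (relOpen_self _))
    (sim_dim_le h3 hXs h3.1 le_rfl hsub (half_relopen P (flat_sub hX) (by decide)))
  subst hi
  refine ⟨h1, h2, fun ε hε => ?_⟩
  have hcase : ε = 1 ∨ ε = -1 := by
    revert hε; cases ε <;> decide
  rcases hcase with rfl | rfl
  · exact h3
  · exact h4

lemma flat_R2 (hT : IsSimanifold n T) (hA : IsDA n T A) {X : Set (Euc N)} (hX : X ∈ flats A)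
    {P : Dehyperplane N n T} (hP : P ∈ A) (hnot : ¬ X ⊆ P.P) {ε : SignType} (hε : ε ≠ 0)
    {x : Euc N} (hx : x ∈ X) (hxP : x ∈ P.P) : x ∈ closure (half P ε X) := by
  have hne : (P.P ∩ X).Nonempty := ⟨x, hxP, hx⟩
  obtain ⟨h1, h2, h3⟩ := flat_key hT hA hX hP hne hnot
  have hXs := flat_sim hT hA hX
  have hXT := flat_sub hX
  have hO := half_relopen P hXT hε
  have hfr : ∀ z ∈ X, z ∈ closure (half P ε X) → z ∈ half P ε X ∨ z ∈ P.P ∩ X := by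
    intro z hz hzc
    rcases sg_closure P (fun y hy => ⟨hXT hy.1, hy.2⟩) (hXT hz) hzc with h | h
    · exact Or.inl ⟨hz, h⟩
    · exact Or.inr ⟨(sg_zero P z (hXT hz)).1 h, hz⟩
  have hd : ∀ z ∈ half P ε X, z ∉ P.P ∩ X := by
    intro z hz hz'
    exact hε (hz.2 ▸ (sg_zero P z (hXT hz.1)).2 hz'.1)
  obtain ⟨c⟩ := hXs.2.2
  obtain ⟨c'⟩ := h2.2.2
  rcases clopen_conn (sim_conn h2) (S := {z | z ∈ P.P ∩ X ∧ z ∈ closure (half P ε X)})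
    (fun z hz => hz.1)
    (by
      rintro z ⟨hz, hzc⟩
      filter_upwards [clopen_transfer X (P.P ∩ X) (half P ε X) univ c c' inter_subset_right
        (fun z hz => hz.1) isOpen_univ hO hd (fun z hz _ => hfr z hz) z hz trivial hzc] with y hy hyZ
      exact ⟨hyZ, hy hyZ⟩)
    (by
      rintro z ⟨hz, hzc⟩
      have : z ∉ closure (half P ε X) := fun h => hzc ⟨hz, h⟩
      filter_upwards [isClosed_closure.isOpen_compl.eventually_mem this] with y hy hyZ
      exact ⟨hyZ, fun h => hy h.2⟩) with h | h
  · exfalso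
    rcases clopen_conn (sim_conn hXs) (S := half P ε X) (fun z hz => hz.1) hO (by
      rintro z ⟨hz, hzc⟩
      have : z ∉ closure (half P ε X) := by
        intro hc
        rcases hfr z hz hc with h' | h'
        · exact hzc h'
        · have : z ∈ {z | z ∈ P.P ∩ X ∧ z ∈ closure (half P ε X)} := ⟨h', hc⟩
          rw [h] at this; exact this
      filter_upwards [isClosed_closure.isOpen_compl.eventually_mem this] with y hy hyZ
      exact ⟨hyZ, fun h => hy (subset_closure h)⟩) with h' | h'
    · exact (h3 ε hε).1.ne_empty h'
    · exact hd x (by rw [h']; exact hx) ⟨hxP, hx⟩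
  · have : x ∈ {z | z ∈ P.P ∩ X ∧ z ∈ closure (half P ε X)} := by rw [h]; exact ⟨hxP, hx⟩
    exact this.2

lemma flat_coinc (hT : IsSimanifold n T) (hA : IsDA n T A) {X : Set (Euc N)} (hX : X ∈ flats A)
    {P Q : Dehyperplane N n T} (hP : P ∈ A) (hQ : Q ∈ A) (hnP : ¬ X ⊆ P.P) (hnQ : ¬ X ⊆ Q.P)
    (hne : (Q.P ∩ X).Nonempty) (hsub : Q.P ∩ X ⊆ P.P) {x : Euc N} (hx : x ∈ X) (hxP : x ∈ P.P) :
    x ∈ Q.P := by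
  have hneP : (P.P ∩ X).Nonempty := ⟨x, hxP, hx⟩
  obtain ⟨h1, h2, -⟩ := flat_key hT hA hX hP hneP hnP
  obtain ⟨-, h3, -⟩ := flat_key hT hA hX hQ hne hnQ
  have hXP := flat_inter hX hP hneP
  have he : Q.P ∩ (P.P ∩ X) = Q.P ∩ X := by
    ext z
    exact ⟨fun h => ⟨h.1, h.2.2⟩, fun h => ⟨h.1, hsub h, h.2⟩⟩
  by_cases hc : P.P ∩ X ⊆ Q.P
  · exact hc ⟨hxP, hx⟩
  · exfalso
    obtain ⟨h4, h5, -⟩ := flat_key hT hA hXP hQ (he ▸ hne) hc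
    rw [he] at h5
    have e1 := sdim_eq h3
    have e2 := sdim_eq h2
    have e3 := sdim_eq h5
    omega

lemma flat_coinc_sg (hT : IsSimanifold n T) (hA : IsDA n T A) {X : Set (Euc N)} (hX : X ∈ flats A)
    {P Q : Dehyperplane N n T} (hP : P ∈ A) (hQ : Q ∈ A) (hnQ : ¬ X ⊆ Q.P)
    (hne : (Q.P ∩ X).Nonempty) (hsub : Q.P ∩ X ⊆ P.P) {ε : SignType} (hε : ε ≠ 0) {x y : Euc N}
    (hx : x ∈ half Q ε X) (hy : y ∈ half Q ε X) : sg P y = sg P x := by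
  have hXT := flat_sub hX
  by_cases hnP : X ⊆ P.P
  · rw [(sg_zero P x (hXT hx.1)).2 (hnP hx.1), (sg_zero P y (hXT hy.1)).2 (hnP hy.1)]
  · refine const_of_disj P (sim_conn ((flat_key hT hA hX hQ hne hnQ).2.2 ε hε))
      (fun z hz => hXT hz.1) ?_ hx hy
    intro z hz h0
    have := flat_coinc hT hA hX hP hQ hnP hnQ hne hsub hz.1 ((sg_zero P z (hXT hz.1)).1 h0)
    exact hε (hz.2 ▸ (sg_zero Q z (hXT hz.1)).2 this)

end NR5

section NR6
open Metric Topology Filter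

variable {N n : ℕ} {T : Set (Euc N)} {A : Set (Dehyperplane N n T)}

/-- `x` is generic in `X`. -/
def Gen (A : Set (Dehyperplane N n T)) (X : Set (Euc N)) (x : Euc N) : Prop :=
  ∀ P ∈ A, sg P x = 0 → X ⊆ P.P

/-- points near `x` keep the nonzero signs -/
lemma near_signs (B : Set (Dehyperplane N n T)) (hB : B.Finite) {x : Euc N} (hx : x ∈ T) :
    ∀ᶠ z in 𝓝 x, ∀ P ∈ B, sg P x ≠ 0 → z ∈ T → sg P z = sg P x := by
  rw [hB.eventually_all]
  intro P _
  by_cases h : sg P x = 0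
  · exact Eventually.of_forall fun z h' => absurd h h'
  · filter_upwards [sg_loc P x h hx] with z hz _ hzT using hz hzT

lemma gen_dense (hT : IsSimanifold n T) (hA : IsDA n T A) {X : Set (Euc N)} (hX : X ∈ flats A)
    {x : Euc N} (hx : x ∈ X) {U : Set (Euc N)} (hU : U ∈ 𝓝 x) : ∃ y ∈ X, y ∈ U ∧ Gen A X y := by
  have hXT := flat_sub hX
  suffices h : ∀ B : Set (Dehyperplane N n T), B.Finite → B ⊆ A → ∀ U : Set (Euc N), IsOpen U →
      (∃ x ∈ X, x ∈ U) → ∃ y ∈ X, y ∈ U ∧ ∀ P ∈ B, sg P y = 0 → X ⊆ P.P by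
    obtain ⟨V, hVU, hV, hxV⟩ := _root_.mem_nhds_iff.1 hU
    obtain ⟨y, hy, hyV, hg⟩ := h A hA.1 le_rfl V hV ⟨x, hx, hxV⟩
    exact ⟨y, hy, hVU hyV, hg⟩
  intro B hB
  induction B, hB using Set.Finite.induction_on with
  | empty =>
    rintro - U hU ⟨x, hx, hxU⟩
    exact ⟨x, hx, hxU, fun P hP => absurd hP (by simp)⟩
  | @insert Q B hQ hBf ih =>
    intro hBA U hU hne
    obtain ⟨y, hy, hyU, hg⟩ := ih ((subset_insert _ _).trans hBA) U hU hne
    by_cases hc : sg Q y = 0 → X ⊆ Q.P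
    · refine ⟨y, hy, hyU, ?_⟩
      rintro P (rfl | hP)
      · exact hc
      · exact hg P hP
    · push Not at hc
      have hcl := flat_R2 hT hA hX (hBA (mem_insert _ _)) hc.2 (ε := 1) (by decide) hy
        ((sg_zero Q y (hXT hy)).1 hc.1)
      obtain ⟨z, ⟨hzU, hzs⟩, hz⟩ := mem_closure_iff_nhds.1 hcl _
        (inter_mem (hU.mem_nhds hyU) (near_signs B hBf (hXT hy)))
      refine ⟨z, hz.1, hzU, ?_⟩
      rintro P (rfl | hP) h0
      · rw [hz.2] at h0; exact absurd h0 (by decide)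
      · refine hg P hP ?_
        by_contra hne
        have := hzs P hP hne (hXT hz.1)
        exact hne (this ▸ h0)

lemma gen_dense_open (hT : IsSimanifold n T) (hA : IsDA n T A) {X : Set (Euc N)}
    (hX : X ∈ flats A) {O : Set (Euc N)} (hOX : O ⊆ X) (hO : RelOpen O X) {x : Euc N}
    (hx : x ∈ closure O) {U : Set (Euc N)} (hU : U ∈ 𝓝 x) : ∃ y ∈ O, y ∈ U ∧ Gen A X y := by
  obtain ⟨V, hVU, hV, hxV⟩ := _root_.mem_nhds_iff.1 hU
  obtain ⟨o, hoV, ho⟩ := mem_closure_iff.1 hx V hV hxV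
  obtain ⟨y, hy, ⟨hyV, hyO⟩, hg⟩ := gen_dense hT hA hX (hOX ho)
    (inter_mem (hV.mem_nhds hoV) (hO o ho))
  exact ⟨y, hyO hy, hVU hyV, hg⟩

/-- the cell of `X` with given signs on `B`. -/
def cell (B : Set (Dehyperplane N n T)) (τ : Dehyperplane N n T → SignType) (X : Set (Euc N)) :
    Set (Euc N) := {x | x ∈ X ∧ ∀ P ∈ B, sg P x = τ P}

lemma cell_relopen {B : Set (Dehyperplane N n T)} (hB : B.Finite)
    {τ : Dehyperplane N n T → SignType} (hτ : ∀ P ∈ B, τ P ≠ 0) {X : Set (Euc N)} (hX : X ⊆ T) :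
    RelOpen (cell B τ X) X := by
  rintro x ⟨hx, h⟩
  filter_upwards [near_signs B hB (hX hx)] with z hz hzX
  exact ⟨hzX, fun P hP => by rw [hz P hP (h P hP ▸ hτ P hP) (hX hzX), h P hP]⟩

/-- `S` is a relatively clopen part of `F`, depending only on generic signs. -/
def Good (A : Set (Dehyperplane N n T)) (X F S : Set (Euc N)) : Prop :=
  S ⊆ F ∧ RelOpen S X ∧ RelOpen (F \ S) X ∧ ∀ x ∈ F, ∀ y ∈ F, Gen A X x → Gen A X y →
    (∀ P ∈ A, sg P x = sg P y) → x ∈ S → y ∈ S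

lemma Good.compl {X F S : Set (Euc N)} (h : Good A X F S) : Good A X F (F \ S) := by
  refine ⟨sdiff_subset, h.2.2.1, ?_, ?_⟩
  · rw [sdiff_sdiff_cancel_left h.1]; exact h.2.1
  · intro x hx y hy gx gy hs hxS
    exact ⟨hy, fun hyS => hxS.2 (h.2.2.2 y hy x hx gy gx (fun P hP => (hs P hP).symm) hyS)⟩

lemma claimC (hT : IsSimanifold n T) (hA : IsDA n T A) (B : Set (Dehyperplane N n T))
    (hBf : B.Finite) : B ⊆ A → ∀ τ : Dehyperplane N n T → SignType, (∀ P ∈ B, τ P ≠ 0) →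
    ∀ X ∈ flats A, ∀ S, Good A X (cell B τ X) S → S = ∅ ∨ S = cell B τ X := by
  induction B, hBf using Set.Finite.induction_on with
  | empty =>
    intro _ τ _ X hX S hS
    have : cell ∅ τ X = X := by ext x; simp [cell]
    rw [this] at hS ⊢
    exact clopen_conn (sim_conn (flat_sim hT hA hX)) hS.1 hS.2.1 hS.2.2.1
  | @insert Q B hQB hBf ih =>
    intro hBA τ hτ X hX S hS
    have hQ : Q ∈ A := hBA (mem_insert _ _)
    replace ih := ih ((subset_insert _ _).trans hBA) τ (fun P hP => hτ P (mem_insert_of_mem _ hP))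
    have hε : τ Q ≠ 0 := hτ Q (mem_insert _ _)
    have hτB : ∀ P ∈ B, τ P ≠ 0 := fun P hP => hτ P (mem_insert_of_mem _ hP)
    have hXT := flat_sub hX
    set F := cell (insert Q B) τ X with hF
    set G := cell B τ X with hG
    have hFG : ∀ x, x ∈ F ↔ x ∈ G ∧ sg Q x = τ Q := by
      intro x
      constructor
      · rintro ⟨hx, h⟩
        exact ⟨⟨hx, fun P hP => h P (mem_insert_of_mem _ hP)⟩, h Q (mem_insert _ _)⟩
      · rintro ⟨⟨hx, h⟩, h'⟩
        refine ⟨hx, ?_⟩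
        rintro P (rfl | hP)
        · exact h'
        · exact h P hP
    have hGo : RelOpen G X := cell_relopen hBf hτB hXT
    have hFo : RelOpen F X := cell_relopen (hBf.insert Q) hτ hXT
    have hFX : F ⊆ X := fun x hx => hx.1
    -- closure facts
    have hcl : ∀ S, S ⊆ F → ∀ z ∈ X, z ∈ closure S → sg Q z = τ Q ∨ sg Q z = 0 := by
      intro S hSF z hz hzS
      exact sg_closure Q (fun y hy => ⟨hXT (hFX (hSF hy)), ((hFG y).1 (hSF hy)).2⟩) (hXT hz) hzS
    have sub : ∀ S, Good A X F S → (∀ z ∈ G, sg Q z = 0 → z ∉ closure S) → S = ∅ ∨ S = F := by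
      intro S hS hTS
      suffices hgood : Good A X G S by
        rcases ih X hX S hgood with h | h
        · exact Or.inl h
        · refine Or.inr (hS.1.antisymm fun x hx => ?_)
          rw [h]; exact ((hFG x).1 hx).1
      refine ⟨fun x hx => ((hFG x).1 (hS.1 hx)).1, hS.2.1, ?_, ?_⟩
      · rintro z ⟨hzG, hzS⟩
        by_cases hzF : z ∈ F
        · filter_upwards [hS.2.2.1 z ⟨hzF, hzS⟩] with y hy hyX
          exact ⟨((hFG y).1 (hy hyX).1).1, (hy hyX).2⟩
        · have : z ∉ closure S := by
            intro hc
            rcases hcl S hS.1 z hzG.1 hc with h | h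
            · exact hzF ((hFG z).2 ⟨hzG, h⟩)
            · exact hTS z hzG h hc
          filter_upwards [hGo z hzG, isClosed_closure.isOpen_compl.eventually_mem this] with
            y hy hy2 hyX
          exact ⟨hy hyX, fun h => hy2 (subset_closure h)⟩
      · intro x hx y hy gx gy hs hxS
        have h1 := (hFG x).1 (hS.1 hxS)
        exact hS.2.2.2 x (hS.1 hxS) y ((hFG y).2 ⟨hy, by rw [← hs Q hQ, h1.2]⟩) gx gy hs hxS
    by_cases hne : (Q.P ∩ X).Nonempty
    swap
    · refine sub S hS fun z hz h0 _ => hne ⟨z, (sg_zero Q z (hXT hz.1)).1 h0, hz.1⟩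
    by_cases hXQ : X ⊆ Q.P
    · left
      rw [eq_empty_iff_forall_notMem]
      intro x hx
      have h1 := ((hFG x).1 (hS.1 hx)).2
      rw [(sg_zero Q x (hXT (hFX (hS.1 hx)))).2 (hXQ (hFX (hS.1 hx)))] at h1
      exact hε h1.symm
    have hX' := flat_inter hX hQ hne
    have hX'T := flat_sub hX'
    set X' := Q.P ∩ X with hX'def
    have hX's := flat_sim hT hA hX'
    have hXs := flat_sim hT hA hX
    obtain ⟨c⟩ := hXs.2.2
    obtain ⟨c'⟩ := hX's.2.2
    set G' := cell B τ X' with hG'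
    have hG'o : RelOpen G' X' := cell_relopen hBf hτB hX'T
    have hG'G : ∀ z ∈ G', z ∈ G := fun z hz => ⟨hz.1.2, hz.2⟩
    -- traces are relatively open
    have hTo : ∀ S, Good A X F S → RelOpen {z | z ∈ G' ∧ z ∈ closure S} X' := by
      rintro S hS z ⟨hzG, hzS⟩
      have h1 := clopen_transfer X X' S {x | ∀ᶠ y in 𝓝 x, y ∈ X → y ∈ G} c c'
        inter_subset_right (hS.1.trans hFX) isOpen_setOfPred_eventually_nhds hS.2.1
        (by
          intro w hw hw'
          have h2 := ((hFG w).1 (hS.1 hw)).2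
          rw [(sg_zero Q w (hXT hw'.2)).2 hw'.1] at h2
          exact hε h2.symm)
        (by
          intro w hwX hwU hwS
          have hwG : w ∈ G := Eventually.self_of_nhds (p := fun y => y ∈ X → y ∈ G) hwU hwX
          rcases hcl S hS.1 w hwX hwS with h | h
          · left
            by_contra hcon
            obtain ⟨y, hy, hyS⟩ := mem_closure_iff_nhds.1 hwS _
              (hS.2.2.1 w ⟨(hFG w).2 ⟨hwG, h⟩, hcon⟩)
            exact (hy (hFX (hS.1 hyS))).2 hyS
          · exact Or.inr ⟨(sg_zero Q w (hXT hwX)).1 h, hwX⟩)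
        z hzG.1 (hGo z (hG'G z hzG)) hzS
      filter_upwards [h1, hG'o z hzG] with y hy hy' hyX
      exact ⟨hy' hyX, hy hyX⟩
    have hK : ∀ S, Good A X F S → ∀ S2, S2 ⊆ F → RelOpen S2 X → ∀ x ∈ G', ∀ y ∈ G',
        Gen A X' x → (∀ P ∈ A, sg P x = sg P y) → x ∈ closure S → y ∈ closure S2 →
        ∀ V ∈ 𝓝 y, ∃ w ∈ S2, w ∈ V ∧ w ∈ S := by
      intro S hS S2 hS2 hS2o x hx y hy gx hs hxS hyS V hV
      obtain ⟨s, hsS, hsn, gs⟩ := gen_dense_open hT hA hX (hS.1.trans hFX) hS.2.1 hxS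
        (near_signs A hA.1 (hX'T hx.1))
      obtain ⟨w, hwS, ⟨hwn, hwV⟩, gw⟩ := gen_dense_open hT hA hX (hS2.trans hFX) hS2o hyS
        (inter_mem (near_signs A hA.1 (hX'T hy.1)) hV)
      refine ⟨w, hwS, hwV, hS.2.2.2 s (hS.1 hsS) w (hS2 hwS) gs gw (fun P hP => ?_) hsS⟩
      have hsF := (hFG s).1 (hS.1 hsS)
      have hwF := (hFG w).1 (hS2 hwS)
      by_cases h0 : sg P x = 0
      · exact flat_coinc_sg hT hA hX hP hQ hXQ hne (gx P hP h0) hε ⟨hwF.1.1, hwF.2⟩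
          ⟨hsF.1.1, hsF.2⟩
      · rw [hsn P hP h0 (hXT hsF.1.1), hwn P hP (hs P hP ▸ h0) (hXT hwF.1.1), hs P hP]
    have hTN : ∀ S, Good A X F S → Good A X' G' {z | z ∈ G' ∧ z ∈ closure S} := by
      intro S hS
      refine ⟨fun z hz => hz.1, hTo S hS, ?_, ?_⟩
      · rintro z ⟨hz, hz'⟩
        have : z ∉ closure S := fun h => hz' ⟨hz, h⟩
        filter_upwards [hG'o z hz, isClosed_closure.isOpen_compl.eventually_mem this] with
          y hy hy2 hyX
        exact ⟨hy hyX, fun h => hy2 h.2⟩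
      · intro x hx y hy gx gy hs hxS
        refine ⟨hy, ?_⟩
        have hyF : y ∈ closure F := by
          have h1 := flat_R2 hT hA hX hQ hXQ hε hy.1.2 hy.1.1
          rw [mem_closure_iff_nhds] at h1 ⊢
          intro V hV
          obtain ⟨z, ⟨hzV, hzG⟩, hz⟩ := h1 _ (inter_mem hV (hGo y (hG'G y hy)))
          exact ⟨z, hzV, (hFG z).2 ⟨hzG hz.1, hz.2⟩⟩
        rw [mem_closure_iff_nhds]
        intro V hV
        obtain ⟨w, -, hwV, hwS⟩ := hK S hS F le_rfl hFo x hx y hy gx hs hxS.2 hyF V hV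
        exact ⟨w, hwV, hwS⟩
    rcases ih X' hX' _ (hTN S hS) with h | h
    · refine sub S hS fun z hz h0 hc => ?_
      have : z ∈ {z | z ∈ G' ∧ z ∈ closure S} :=
        ⟨⟨⟨(sg_zero Q z (hXT hz.1)).1 h0, hz.1⟩, hz.2⟩, hc⟩
      rw [h] at this; exact this
    · rcases sub (F \ S) hS.compl (fun z hz h0 hc => by
        have hz' : z ∈ {z | z ∈ G' ∧ z ∈ closure (F \ S)} :=
          ⟨⟨⟨(sg_zero Q z (hXT hz.1)).1 h0, hz.1⟩, hz.2⟩, hc⟩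
        obtain ⟨x, hx, -, gx⟩ := gen_dense_open hT hA hX' (fun z hz => hz.1.1) (hTo _ hS.compl)
          (subset_closure hz') univ_mem
        have hxS : x ∈ {z | z ∈ G' ∧ z ∈ closure S} := by rw [h]; exact hx.1
        obtain ⟨w, hw, -, hw'⟩ := hK S hS (F \ S) sdiff_subset hS.2.2.1 x hx.1 x hx.1 gx
          (fun _ _ => rfl) hxS.2 hx.2 univ univ_mem
        exact hw.2 hw') with h' | h'
      · exact Or.inr (hS.1.antisymm (sdiff_eq_empty.1 h'))
      · left
        rw [← sdiff_sdiff_cancel_left hS.1, h', sdiff_self]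

lemma cell_R3 (hT : IsSimanifold n T) (hA : IsDA n T A) {B : Set (Dehyperplane N n T)}
    (hB : B ⊆ A) {τ : Dehyperplane N n T → SignType} (hτ : ∀ P ∈ B, τ P ≠ 0)
    {X : Set (Euc N)} (hX : X ∈ flats A) {P : Dehyperplane N n T} (hP : P ∈ A)
    (h0 : ∀ x ∈ cell B τ X, sg P x ≠ 0) {x y : Euc N} (hx : x ∈ cell B τ X)
    (hy : y ∈ cell B τ X) : sg P y = sg P x := by
  have hXT := flat_sub hX
  have hFo : RelOpen (cell B τ X) X := cell_relopen (hA.1.subset hB) hτ hXT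
  rcases claimC hT hA B (hA.1.subset hB) hB τ hτ X hX {z | z ∈ cell B τ X ∧ sg P z = sg P x}
    ⟨fun z hz => hz.1, by
      rintro z ⟨hz, hz'⟩
      filter_upwards [hFo z hz, sg_loc P z (h0 z hz) (hXT hz.1)] with w hw hw' hwX
      exact ⟨hw hwX, (hw' (hXT hwX)).trans hz'⟩, by
      rintro z ⟨hz, hz'⟩
      filter_upwards [hFo z hz, sg_loc P z (h0 z hz) (hXT hz.1)] with w hw hw' hwX
      exact ⟨hw hwX, fun hc => hz' ⟨hz, by rw [← hw' (hXT hwX)]; exact hc.2⟩⟩, by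
      intro a ha b hb _ _ hs ha'
      exact ⟨hb, by rw [← hs P hP]; exact ha'.2⟩⟩ with h | h
  · have : x ∈ {z | z ∈ cell B τ X ∧ sg P z = sg P x} := ⟨hx, rfl⟩
    rw [h] at this; exact absurd this (by simp)
  · rw [← h] at hy; exact hy.2

end NR6

section NR7
open Metric Topology Filter

variable {N n : ℕ} {T : Set (Euc N)} {A : Set (Dehyperplane N n T)}

lemma plus_inter_eq (P : Dehyperplane N n T) (X : Set (Euc N)) : P.plus ∩ X = half P 1 X := by
  ext x; exact ⟨fun h => ⟨h.2, (sg_pos P x).2 h.1⟩, fun h => ⟨(sg_pos P x).1 h.2, h.1⟩⟩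

lemma minus_inter_eq (P : Dehyperplane N n T) (X : Set (Euc N)) :
    P.minus ∩ X = half P (-1) X := by
  ext x; exact ⟨fun h => ⟨h.2, (sg_neg P x).2 h.1⟩, fun h => ⟨(sg_neg P x).1 h.2, h.1⟩⟩

lemma exists_restr (hT : IsSimanifold n T) (hA : IsDA n T A) {Y : Set (Euc N)} (hY : Y ∈ flats A)
    {P : Dehyperplane N n T} (hP : P ∈ A) (hne : (P.P ∩ Y).Nonempty) (hnot : ¬ Y ⊆ P.P) :
    ∃ Q ∈ restrict A (sdim Y) Y, Q.P = P.P ∩ Y ∧ Q.plus = P.plus ∩ Y ∧ Q.minus = P.minus ∩ Y := by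
  obtain ⟨h1, h2, h3⟩ := flat_key hT hA hY hP hne hnot
  have hYT := flat_sub hY
  let Q : Dehyperplane N (sdim Y) Y :=
    { P := P.P ∩ Y
      plus := P.plus ∩ Y
      minus := P.minus ∩ Y
      simP := h2
      simPlus := by rw [plus_inter_eq]; exact h3 1 (by decide)
      simMinus := by rw [minus_inter_eq]; exact h3 (-1) (by decide)
      union_eq := by
        rw [← union_inter_distrib_right, ← union_inter_distrib_right, P.union_eq]
        exact inter_eq_right.2 hYT
      disj_pP := P.disj_pP.mono inter_subset_left inter_subset_left
      disj_pm := P.disj_pm.mono inter_subset_left inter_subset_left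
      disj_Pm := P.disj_Pm.mono inter_subset_left inter_subset_left
      closure_eq := by
        apply Subset.antisymm
        · rintro z ⟨hz1, hz2⟩
          have hzP : z ∈ P.P := by
            rw [← P.closure_eq]
            exact ⟨closure_mono inter_subset_left hz1, closure_mono inter_subset_left hz2⟩
          refine ⟨hzP, ?_⟩
          obtain ⟨-, B, hB, rfl⟩ := hY
          refine ⟨P_sub P hzP, mem_iInter₂.2 fun R hR => ?_⟩
          rw [← (isClosed_P R).closure_eq]
          refine closure_mono ?_ hz1
          intro w hw
          exact mem_iInter₂.1 hw.2.2 R hR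
        · rintro z ⟨hzP, hzY⟩
          rw [plus_inter_eq, minus_inter_eq]
          exact ⟨flat_R2 hT hA hY hP hnot (by decide) hzY hzP,
            flat_R2 hT hA hY hP hnot (by decide) hzY hzP⟩ }
  exact ⟨Q, ⟨P, hP, hnot, hne, rfl, rfl, rfl⟩, rfl, rfl, rfl⟩

lemma sg_restr {m : ℕ} {Y : Set (Euc N)} {P : Dehyperplane N n T} {Q : Dehyperplane N m Y}
    (h1 : Q.plus = P.plus ∩ Y) (h2 : Q.minus = P.minus ∩ Y) {z : Euc N} (hz : z ∈ Y) :
    sg Q z = sg P z := by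
  have i1 : z ∈ Q.plus ↔ z ∈ P.plus := by rw [h1]; exact ⟨fun h => h.1, fun h => ⟨h, hz⟩⟩
  have i2 : z ∈ Q.minus ↔ z ∈ P.minus := by rw [h2]; exact ⟨fun h => h.1, fun h => ⟨h, hz⟩⟩
  unfold sg
  split_ifs <;> tauto

lemma gen_iff (hT : IsSimanifold n T) (hA : IsDA n T A) {Y : Set (Euc N)} (hY : Y ∈ flats A)
    {x : Euc N} (hx : x ∈ Y) : Gen A Y x ↔ ∀ Q ∈ restrict A (sdim Y) Y, sg Q x ≠ 0 := by
  have hYT := flat_sub hY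
  constructor
  · rintro hg Q ⟨P, hP, hnot, hne, e1, e2, e3⟩ h0
    rw [sg_restr e2 e3 hx] at h0
    exact hnot (hg P hP h0)
  · intro h P hP h0
    by_contra hnot
    obtain ⟨Q, hQ, e1, e2, e3⟩ := exists_restr hT hA hY hP
      ⟨x, (sg_zero P x (hYT hx)).1 h0, hx⟩ hnot
    exact h Q hQ (by rw [sg_restr e2 e3 hx]; exact h0)

lemma signs_iff (hT : IsSimanifold n T) (hA : IsDA n T A) {Y : Set (Euc N)} (hY : Y ∈ flats A)
    {x z : Euc N} (hx : x ∈ Y) (hz : z ∈ Y) :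
    (∀ Q ∈ restrict A (sdim Y) Y, sg Q z = sg Q x) ↔ ∀ P ∈ A, sg P z = sg P x := by
  have hYT := flat_sub hY
  constructor
  · intro h P hP
    by_cases hsub : Y ⊆ P.P
    · rw [(sg_zero P x (hYT hx)).2 (hsub hx), (sg_zero P z (hYT hz)).2 (hsub hz)]
    by_cases hne : (P.P ∩ Y).Nonempty
    · obtain ⟨Q, hQ, e1, e2, e3⟩ := exists_restr hT hA hY hP hne hsub
      rw [← sg_restr e2 e3 hx, ← sg_restr e2 e3 hz]
      exact h Q hQ
    · refine const_of_disj P (sim_conn (flat_sim hT hA hY)) hYT ?_ hx hz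
      intro w hw h0
      exact hne ⟨w, (sg_zero P w (hYT hw)).1 h0, hw⟩
  · rintro h Q ⟨P, hP, hnot, hne, e1, e2, e3⟩
    rw [sg_restr e2 e3 hx, sg_restr e2 e3 hz]
    exact h P hP

open Classical in
/-- the sign vector of `x` on `B` -/
noncomputable def sv (B : Finset (Dehyperplane N n T)) (x : Euc N) :
    Dehyperplane N n T → SignType :=
  fun P => if P ∈ B then sg P x else 0

/-- the flat of a sign vector -/
def fl (B : Finset (Dehyperplane N n T)) (X : Set (Euc N)) (τ : Dehyperplane N n T → SignType) :
    Set (Euc N) := {x | x ∈ X ∧ ∀ P ∈ B, τ P = 0 → x ∈ P.P}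

lemma fl_flat {X : Set (Euc N)} (hX : X ∈ flats A) {B : Finset (Dehyperplane N n T)}
    (hB : ∀ P ∈ B, P ∈ A) {τ : Dehyperplane N n T → SignType} (hne : (fl B X τ).Nonempty) :
    fl B X τ ∈ flats A := by
  refine ⟨hne, ?_⟩
  obtain ⟨-, C, hC, rfl⟩ := hX
  refine ⟨C ∪ {P | P ∈ B ∧ τ P = 0}, union_subset hC (fun P hP => hB P hP.1), ?_⟩
  ext x
  simp only [fl, mem_inter_iff, mem_iInter, mem_union]
  constructor
  · rintro ⟨⟨h1, h2⟩, h3⟩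
    refine ⟨h1, ?_⟩
    rintro P (hP | hP)
    · exact h2 P hP
    · exact h3 P hP.1 hP.2
  · rintro ⟨h1, h2⟩
    exact ⟨⟨h1, fun P hP => h2 P (Or.inl hP)⟩, fun P hP h0 => h2 P (Or.inr ⟨hP, h0⟩)⟩

lemma sv_mem_fl {X : Set (Euc N)} (hXT : X ⊆ T) (B : Finset (Dehyperplane N n T)) {x : Euc N}
    (hx : x ∈ X) : x ∈ fl B X (sv B x) := by
  refine ⟨hx, fun P hP h0 => ?_⟩
  simp only [sv, hP, if_true] at h0
  exact (sg_zero P x (hXT hx)).1 h0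

lemma sv_eq_iff (B : Finset (Dehyperplane N n T)) (x z : Euc N) :
    sv B z = sv B x ↔ ∀ P ∈ B, sg P z = sg P x := by
  constructor
  · intro h P hP
    have := congrFun h P
    simpa [sv, hP] using this
  · intro h
    funext P
    by_cases hP : P ∈ B
    · simp [sv, hP, h P hP]
    · simp [sv, hP]

open Classical in
lemma sv_insert (B : Finset (Dehyperplane N n T)) (P : Dehyperplane N n T) (hP : P ∉ B)
    (x : Euc N) : sv (insert P B) x = Function.update (sv B x) P (sg P x) := by
  funext Q
  by_cases h : Q = P
  · subst h; simp [sv]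
  · simp [sv, h]

open Classical in
lemma sv_update (B : Finset (Dehyperplane N n T)) (P : Dehyperplane N n T) (hP : P ∉ B)
    (x : Euc N) : Function.update (sv B x) P 0 = sv B x := by
  funext Q
  by_cases h : Q = P
  · subst h; simp [sv, hP]
  · simp [h]

lemma finite_sv (B : Finset (Dehyperplane N n T)) (X : Set (Euc N)) : (sv B '' X).Finite := by
  classical
  induction B using Finset.induction_on with
  | empty =>
    refine (finite_singleton (fun _ => 0)).subset ?_
    rintro _ ⟨x, -, rfl⟩
    funext P
    simp [sv]
  | insert P B hP ih =>
    refine ((ih.prod (finite_univ (α := SignType))).image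
      (fun q => Function.update q.1 P q.2)).subset ?_
    rintro _ ⟨x, hx, rfl⟩
    exact ⟨(sv B x, sg P x), ⟨⟨x, hx, rfl⟩, trivial⟩, (sv_insert B P hP x).symm⟩

lemma face_count (hT : IsSimanifold n T) (hA : IsDA n T A) {X : Set (Euc N)} (hX : X ∈ flats A)
    (B : Finset (Dehyperplane N n T)) (hB : ∀ P ∈ B, P ∈ A) :
    ∑ τ ∈ (finite_sv B X).toFinset, (-1 : ℤ) ^ (sdim (fl B X τ)) = (-1) ^ (sdim X) := by
  classical
  have hXT := flat_sub hX
  induction B using Finset.induction_on with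
  | empty =>
    have h1 : (finite_sv (∅ : Finset (Dehyperplane N n T)) X).toFinset = {fun _ => 0} := by
      ext τ
      simp only [Finite.mem_toFinset, Finset.mem_singleton]
      constructor
      · rintro ⟨x, -, rfl⟩; funext P; simp [sv]
      · rintro rfl
        obtain ⟨x, hx⟩ := hX.1
        exact ⟨x, hx, by funext P; simp [sv]⟩
    have h2 : fl (∅ : Finset (Dehyperplane N n T)) X (fun _ => 0) = X := by
      ext x; simp [fl]
    rw [h1, Finset.sum_singleton, h2]
  | insert P B hPB ih =>
    have hPA : P ∈ A := hB P (Finset.mem_insert_self _ _)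
    have hBA : ∀ Q ∈ B, Q ∈ A := fun Q hQ => hB Q (Finset.mem_insert_of_mem hQ)
    rw [← ih hBA]
    rw [← Finset.sum_fiberwise_of_maps_to (t := (finite_sv B X).toFinset)
      (g := fun τ => Function.update τ P 0)]
    swap
    · intro τ hτ
      simp only [Finite.mem_toFinset] at hτ ⊢
      obtain ⟨x, hx, rfl⟩ := hτ
      rw [sv_insert B P hPB, Function.update_idem, sv_update B P hPB]
      exact ⟨x, hx, rfl⟩
    apply Finset.sum_congr rfl
    intro τ hτ
    simp only [Finite.mem_toFinset] at hτ
    obtain ⟨x0, hx0, rfl⟩ := hτ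
    set τ := sv B x0 with hτ
    set F : Set (Euc N) := {x | x ∈ X ∧ sv B x = τ} with hF
    set Y := fl B X τ with hYdef
    have hYne : Y.Nonempty := ⟨x0, sv_mem_fl hXT B hx0⟩
    have hY : Y ∈ flats A := fl_flat hX hBA hYne
    have hYT := flat_sub hY
    have hτP : τ P = 0 := by simp [hτ, sv, hPB]
    have hfib : {ρ ∈ (finite_sv (insert P B) X).toFinset | Function.update ρ P 0 = τ} =
        (Finset.univ.filter (fun ε : SignType => ∃ x ∈ F, sg P x = ε)).image
          (Function.update τ P) := by
      ext ρ
      simp only [Finset.mem_filter, Finite.mem_toFinset, Finset.mem_image, Finset.mem_univ,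
        true_and]
      constructor
      · rintro ⟨⟨x, hx, rfl⟩, h⟩
        rw [sv_insert B P hPB, Function.update_idem, sv_update B P hPB] at h
        exact ⟨sg P x, ⟨x, ⟨hx, h⟩, rfl⟩, by rw [sv_insert B P hPB, h]⟩
      · rintro ⟨_, ⟨x, ⟨hx, h⟩, rfl⟩, rfl⟩
        refine ⟨⟨x, hx, by rw [sv_insert B P hPB, h]⟩, ?_⟩
        rw [Function.update_idem, ← hτP, Function.update_eq_self]
    rw [hfib, Finset.sum_image (fun a _ b _ h => Function.update_injective τ P h)]
    have hfl0 : fl (insert P B) X (Function.update τ P 0) = P.P ∩ Y := by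
      ext z
      simp only [fl, hYdef, mem_inter_iff]
      constructor
      · rintro ⟨h1, h2⟩
        refine ⟨h2 P (Finset.mem_insert_self _ _) (by simp), h1, fun Q hQ h0 => ?_⟩
        refine h2 Q (Finset.mem_insert_of_mem hQ) ?_
        rwa [Function.update_of_ne (ne_of_mem_of_not_mem hQ hPB)]
      · rintro ⟨h1, h2, h3⟩
        refine ⟨h2, fun Q hQ h0 => ?_⟩
        rcases Finset.mem_insert.1 hQ with rfl | hQ
        · exact h1
        · rw [Function.update_of_ne (ne_of_mem_of_not_mem hQ hPB)] at h0
          exact h3 Q hQ h0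
    have hfl1 : ∀ ε : SignType, ε ≠ 0 → fl (insert P B) X (Function.update τ P ε) = Y := by
      intro ε hε
      ext z
      simp only [fl, hYdef]
      constructor
      · rintro ⟨h1, h2⟩
        refine ⟨h1, fun Q hQ h0 => ?_⟩
        refine h2 Q (Finset.mem_insert_of_mem hQ) ?_
        rwa [Function.update_of_ne (ne_of_mem_of_not_mem hQ hPB)]
      · rintro ⟨h2, h3⟩
        refine ⟨h2, fun Q hQ h0 => ?_⟩
        rcases Finset.mem_insert.1 hQ with rfl | hQ
        · simp at h0; exact absurd h0 hε
        · rw [Function.update_of_ne (ne_of_mem_of_not_mem hQ hPB)] at h0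
          exact h3 Q hQ h0
    -- `F` is a cell of `Y`
    set B' : Set (Dehyperplane N n T) := {Q | Q ∈ B ∧ τ Q ≠ 0} with hB'
    have hB'A : B' ⊆ A := fun Q hQ => hBA Q hQ.1
    have hB'τ : ∀ Q ∈ B', τ Q ≠ 0 := fun Q hQ => hQ.2
    have hFc : F = cell B' τ Y := by
      ext z
      constructor
      · rintro ⟨hz, h⟩
        refine ⟨by rw [hYdef, ← h]; exact sv_mem_fl hXT B hz, fun Q hQ => ?_⟩
        rw [← h]; simp [sv, hQ.1]
      · rintro ⟨hz, h⟩
        refine ⟨hz.1, ?_⟩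
        funext Q
        by_cases hQ : Q ∈ B
        · by_cases h0 : τ Q = 0
          · have := (sg_zero Q z (hYT hz)).2 (hz.2 Q hQ h0)
            simp [sv, hQ, this, h0]
          · have := h Q ⟨hQ, h0⟩
            simp [sv, hQ, this]
        · simp [hτ, sv, hQ]
    have hx0F : x0 ∈ F := ⟨hx0, rfl⟩
    have hFY : ∀ z ∈ F, z ∈ Y := fun z hz => by rw [hFc] at hz; exact hz.1
    by_cases hz : ∃ z ∈ F, sg P z = 0
    · obtain ⟨z, hzF, hz0⟩ := hz
      have hzP : z ∈ P.P := (sg_zero P z (hYT (hFY z hzF))).1 hz0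
      by_cases hYP : Y ⊆ P.P
      · have : Finset.univ.filter (fun ε : SignType => ∃ x ∈ F, sg P x = ε) = {0} := by
          ext ε
          simp only [Finset.mem_filter, Finset.mem_univ, true_and, Finset.mem_singleton]
          constructor
          · rintro ⟨x, hx, rfl⟩
            exact (sg_zero P x (hYT (hFY x hx))).2 (hYP (hFY x hx))
          · rintro rfl; exact ⟨z, hzF, hz0⟩
        rw [this, Finset.sum_singleton, hfl0, inter_eq_right.2 hYP]
      · have hall : ∀ ε : SignType, ∃ x ∈ F, sg P x = ε := by
          intro ε
          by_cases hε : ε = 0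
          · exact ⟨z, hzF, hz0.trans hε.symm⟩
          · have h1 := flat_R2 hT hA hY hPA hYP hε (hFY z hzF) hzP
            have h2 : RelOpen F Y := by
              rw [hFc]; exact cell_relopen (hA.1.subset hB'A) hB'τ hYT
            obtain ⟨w, hw, hw'⟩ := mem_closure_iff_nhds.1 h1 _ (h2 z hzF)
            exact ⟨w, hw hw'.1, hw'.2⟩
        have : Finset.univ.filter (fun ε : SignType => ∃ x ∈ F, sg P x = ε) = {0, -1, 1} := by
          ext ε
          simp only [Finset.mem_filter, Finset.mem_univ, true_and, hall ε, true_iff]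
          cases ε <;> decide
        rw [this, Finset.sum_insert (by decide), Finset.sum_insert (by decide),
          Finset.sum_singleton, hfl0, hfl1 1 (by decide), hfl1 (-1) (by decide)]
        obtain ⟨h1, h2, -⟩ := flat_key hT hA hY hPA ⟨z, hzP, hFY z hzF⟩ hYP
        rw [sdim_eq h2]
        obtain ⟨d, hd⟩ := Nat.exists_eq_add_of_le' h1
        rw [hd, Nat.add_sub_cancel, pow_succ]
        ring
    · push Not at hz
      have h0 : ∀ x ∈ cell B' τ Y, sg P x ≠ 0 := by rw [← hFc]; exact hz
      have : Finset.univ.filter (fun ε : SignType => ∃ x ∈ F, sg P x = ε) = {sg P x0} := by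
        ext ε
        simp only [Finset.mem_filter, Finset.mem_univ, true_and, Finset.mem_singleton]
        constructor
        · rintro ⟨x, hx, rfl⟩
          exact cell_R3 hT hA hB'A hB'τ hY hPA h0 (hFc ▸ hx0F) (hFc ▸ hx)
        · rintro rfl; exact ⟨x0, hx0F, rfl⟩
      rw [this, Finset.sum_singleton, hfl1 _ (hz x0 hx0F)]

lemma chamber_count (hT : IsSimanifold n T) (hA : IsDA n T A) {X : Set (Euc N)} (hX : X ∈ flats A)
    (B : Finset (Dehyperplane N n T)) (hB : ∀ P, P ∈ B ↔ P ∈ A) {Y : Set (Euc N)}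
    (hY : Y ∈ flats A) (hYX : Y ⊆ X) :
    Set.ncard {F | IsChamber (restrict A (sdim Y) Y) F} =
      Set.ncard {τ | τ ∈ sv B '' X ∧ fl B X τ = Y} := by
  have hXT := flat_sub hX
  have hYT := flat_sub hY
  -- flats of generic points
  have hflat : ∀ x ∈ Y, Gen A Y x → fl B X (sv B x) = Y := by
    intro x hx hg
    ext z
    constructor
    · rintro ⟨hz, h⟩
      obtain ⟨-, C, hC, rfl⟩ := hY
      refine ⟨hXT hz, mem_iInter₂.2 fun P hP => ?_⟩
      refine h P ((hB P).2 (hC hP)) ?_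
      simp only [sv, (hB P).2 (hC hP), if_true]
      exact (sg_zero P x (hYT hx)).2 (mem_iInter₂.1 hx.2 P hP)
    · intro hz
      refine ⟨hYX hz, fun P hP h0 => ?_⟩
      simp only [sv, hP, if_true] at h0
      exact hg P ((hB P).1 hP) h0 hz
  have hgen : ∀ x ∈ X, fl B X (sv B x) = Y → x ∈ Y ∧ Gen A Y x := by
    intro x hx h
    refine ⟨by rw [← h]; exact sv_mem_fl hXT B hx, fun P hP h0 => ?_⟩
    intro z hz
    rw [← h] at hz
    exact hz.2 P ((hB P).2 hP) (by simp [sv, (hB P).2 hP, h0])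
  have hcell : ∀ x ∈ Y, Gen A Y x → {z | z ∈ X ∧ sv B z = sv B x} =
      Y ∩ ⋂ Q ∈ restrict A (sdim Y) Y, Q.part (sg Q x) := by
    intro x hx hg
    have h1 : ∀ z ∈ Y, (z ∈ ⋂ Q ∈ restrict A (sdim Y) Y, Q.part (sg Q x)) ↔
        ∀ P ∈ A, sg P z = sg P x := by
      intro z hz
      rw [← signs_iff hT hA hY hx hz, mem_iInter₂]
      exact forall₂_congr fun Q _ => part_iff Q z hz _
    ext z
    constructor
    · rintro ⟨hz, h⟩
      have hzY : z ∈ Y := by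
        rw [← hflat x hx hg, ← h]; exact sv_mem_fl hXT B hz
      refine ⟨hzY, (h1 z hzY).2 fun P hP => ?_⟩
      exact (sv_eq_iff B x z).1 h P ((hB P).2 hP)
    · rintro ⟨hz, h⟩
      exact ⟨hYX hz, (sv_eq_iff B x z).2 fun P hP => (h1 z hz).1 h P ((hB P).1 hP)⟩
  have himg : {F | IsChamber (restrict A (sdim Y) Y) F} =
      (fun τ => {z | z ∈ X ∧ sv B z = τ}) '' {τ | τ ∈ sv B '' X ∧ fl B X τ = Y} := by
    ext F
    constructor
    · rintro ⟨⟨x, hx⟩, ε, hε, rfl⟩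
      have hsg : ∀ Q ∈ restrict A (sdim Y) Y, sg Q x = ε Q := fun Q hQ =>
        (part_iff Q x hx.1 _).1 (mem_iInter₂.1 hx.2 Q hQ)
      have hg : Gen A Y x := (gen_iff hT hA hY hx.1).2 fun Q hQ => hsg Q hQ ▸ hε Q hQ
      refine ⟨sv B x, ⟨⟨x, hYX hx.1, rfl⟩, hflat x hx.1 hg⟩, ?_⟩
      simp only
      rw [hcell x hx.1 hg]
      congr 1
      exact iInter₂_congr fun Q hQ => by rw [hsg Q hQ]
    · rintro ⟨_, ⟨⟨x, hx, rfl⟩, h⟩, rfl⟩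
      obtain ⟨hxY, hg⟩ := hgen x hx h
      refine ⟨⟨x, hx, rfl⟩, fun Q => sg Q x, (gen_iff hT hA hY hxY).1 hg, ?_⟩
      exact hcell x hxY hg
  rw [himg]
  apply InjOn.ncard_image
  rintro _ ⟨⟨x, hx, rfl⟩, h⟩ τ' _ he
  have : x ∈ {z | z ∈ X ∧ sv B z = sv B x} := ⟨hx, rfl⟩
  simp only at he
  rw [he] at this
  exact this.2

lemma finite_flats (hA : IsDA n T A) : (flats A).Finite := by
  refine (hA.1.powerset.image (fun B => T ∩ ⋂ P ∈ B, P.P)).subset ?_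
  rintro X ⟨-, B, hB, rfl⟩
  exact ⟨B, hB, rfl⟩

end NR7

/-- for every flat `X` of a DA `A`,
`Σ_{Y ∈ L_A, Y ≥ X} (−1)^{dim Y} #C_{A^Y} = (−1)^{dim X}`
(recall `Y ≥ X` means `Y ⊆ X`). -/
theorem alternating_sum_chambers {N n : ℕ} (hn : 1 ≤ n) {T : Set (Euc N)}
    (hT : IsSimanifold n T) (A : Set (Dehyperplane N n T)) (hA : IsDA n T A)
    (X : Set (Euc N)) (hX : X ∈ flats A) :
    ∑ᶠ Y ∈ {Y ∈ flats A | Y ⊆ X},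
        (-1 : ℤ) ^ (sdim Y) * Set.ncard {F | IsChamber (restrict A (sdim Y) Y) F} =
      (-1 : ℤ) ^ (sdim X) := by
  classical
  have hXT := flat_sub hX
  have hfin : {Y ∈ flats A | Y ⊆ X}.Finite := (finite_flats hA).subset fun Y hY => hY.1
  set B := hA.1.toFinset with hBdef
  have hB : ∀ P, P ∈ B ↔ P ∈ A := fun P => hA.1.mem_toFinset
  rw [finsum_mem_eq_finite_toFinset_sum _ hfin, ← face_count hT hA hX B (fun P hP => (hB P).1 hP),
    ← Finset.sum_fiberwise_of_maps_to (s := (finite_sv B X).toFinset) (t := hfin.toFinset)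
      (g := fun τ => fl B X τ)]
  · apply Finset.sum_congr rfl
    intro Y hY
    have hY' := hfin.mem_toFinset.1 hY
    rw [chamber_count hT hA hX B hB hY'.1 hY'.2]
    have h1 : {τ | τ ∈ sv B '' X ∧ fl B X τ = Y} =
        (({τ ∈ (finite_sv B X).toFinset | fl B X τ = Y} : Finset _) :
          Set (Dehyperplane N n T → SignType)) := by
      ext τ
      simp only [Finset.coe_filter, Finite.mem_toFinset]
    rw [h1, ncard_coe_finset, Finset.sum_congr rfl (g := fun _ => (-1 : ℤ) ^ sdim Y),
      Finset.sum_const, nsmul_eq_mul, mul_comm]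
    intro τ hτ
    rw [(Finset.mem_filter.1 hτ).2]
  · intro τ hτ
    rw [Finite.mem_toFinset] at hτ
    obtain ⟨x, hx, rfl⟩ := hτ
    rw [Finite.mem_toFinset]
    exact ⟨fl_flat hX (fun P hP => (hB P).1 hP) ⟨x, sv_mem_fl hXT B hx⟩, fun z hz => hz.1⟩
end
end
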